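/- arXiv:2603.24884 — 3 statements merged into one kernel-verified Lean document; each statement's English description precedes it below -/
import Mathlib

section
/- For every integer n ≥ 2, the invariant subalgebra VG_n^{S_n} is isomorphic as a ℚ-algebra to ℚ[T]/⟨T^{n+1}⟩, the quotient of the univariate polynomial ring over ℚ by the ideal generated by T^{n+1}. -/
noncomputable section

/-- Index set for the variables `x_{ij}` with `i ≠ j` in `{1, …, n+1}` (as `Fin (n+1)`). -/
abbrev VGidx (n : ℕ) := {p : Fin (n+1) × Fin (n+1) // p.1 ≠ p.2}

/-- The defining ideal of the Varchenko–Gel'fand ring of the braid arrangement `A_n`. -/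
def VGrel (n : ℕ) : Ideal (MvPolynomial (VGidx n) ℚ) :=
  Ideal.span
    ({q | ∃ v : VGidx n, q = MvPolynomial.X v ^ 2} ∪
     {q | ∃ (i j : Fin (n+1)) (hij : i ≠ j),
        q = MvPolynomial.X (⟨(i,j),hij⟩ : VGidx n) + MvPolynomial.X ⟨(j,i),hij.symm⟩} ∪
     {q | ∃ (i j k : Fin (n+1)) (hij : i ≠ j) (hjk : j ≠ k) (hki : k ≠ i),
        q = MvPolynomial.X (⟨(i,j),hij⟩ : VGidx n) * MvPolynomial.X ⟨(j,k),hjk⟩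
          + MvPolynomial.X (⟨(j,k),hjk⟩ : VGidx n) * MvPolynomial.X ⟨(k,i),hki⟩
          + MvPolynomial.X (⟨(k,i),hki⟩ : VGidx n) * MvPolynomial.X ⟨(i,j),hij⟩})

/-- The Varchenko–Gel'fand ring `VG_n`. -/
abbrev VG (n : ℕ) := MvPolynomial (VGidx n) ℚ ⧸ VGrel n

/-- The action of a permutation of `{1, …, n+1}` on the variable indices. -/
def VGpermIdx (n : ℕ) (σ : Equiv.Perm (Fin (n+1))) : VGidx n → VGidx n :=
  fun v => ⟨(σ v.1.1, σ v.1.2), fun h => v.2 (σ.injective h)⟩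

lemma VGrel_stable (n : ℕ) (σ : Equiv.Perm (Fin (n+1))) :
    ∀ a ∈ VGrel n, (MvPolynomial.rename (VGpermIdx n σ)) a ∈ VGrel n := by
  intro a ha
  have hle : (VGrel n).map (MvPolynomial.rename (VGpermIdx n σ)).toRingHom ≤ VGrel n := by
    rw [VGrel, Ideal.map_span, Ideal.span_le]
    rintro q ⟨p, hp, rfl⟩
    apply Ideal.subset_span
    simp only [Set.mem_union, Set.mem_setOf_eq] at hp ⊢
    rcases hp with ((⟨v, rfl⟩ | ⟨i, j, hij, rfl⟩) | ⟨i, j, k, hij, hjk, hki, rfl⟩)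
    · refine Or.inl (Or.inl ⟨VGpermIdx n σ v, ?_⟩)
      simp [map_pow, MvPolynomial.rename_X]
    · refine Or.inl (Or.inr ⟨σ i, σ j, fun h => hij (σ.injective h), ?_⟩)
      simp [map_add, MvPolynomial.rename_X, VGpermIdx]
    · refine Or.inr ⟨σ i, σ j, σ k, fun h => hij (σ.injective h), fun h => hjk (σ.injective h),
        fun h => hki (σ.injective h), ?_⟩
      simp [map_add, map_mul, MvPolynomial.rename_X, VGpermIdx]
  exact hle (Ideal.mem_map_of_mem _ ha)

/-- The algebra automorphism of `VG_n` induced by a permutation of `{1, …, n+1}`. -/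
def VGperm (n : ℕ) (σ : Equiv.Perm (Fin (n+1))) : VG n →ₐ[ℚ] VG n :=
  Ideal.Quotient.liftₐ (VGrel n)
    ((Ideal.Quotient.mkₐ ℚ (VGrel n)).comp (MvPolynomial.rename (VGpermIdx n σ)))
    (fun a ha => by
      simp only [AlgHom.comp_apply, Ideal.Quotient.mkₐ_eq_mk]
      exact Ideal.Quotient.eq_zero_iff_mem.mpr (VGrel_stable n σ a ha))

/-- The subalgebra of `S_n`-invariants of `VG_n`, where `S_n` is the subgroup of permutations
of `{1, …, n+1}` fixing `n+1`. -/
def VGinv (n : ℕ) : Subalgebra ℚ (VG n) where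
  carrier := {x | ∀ σ : Equiv.Perm (Fin (n+1)), σ (Fin.last n) = Fin.last n → VGperm n σ x = x}
  mul_mem' := fun hx hy σ hσ => by rw [map_mul, hx σ hσ, hy σ hσ]
  add_mem' := fun hx hy σ hσ => by rw [map_add, hx σ hσ, hy σ hσ]
  one_mem' := fun σ _ => map_one _
  zero_mem' := fun σ _ => map_zero _
  algebraMap_mem' := fun r σ hσ => AlgHom.commutes _ r

/-- The subalgebra of `S_{n+1}`-invariants of `VG_n`. -/
def VGinvFull (n : ℕ) : Subalgebra ℚ (VG n) where
  carrier := {x | ∀ σ : Equiv.Perm (Fin (n+1)), VGperm n σ x = x}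
  mul_mem' := fun hx hy σ => by rw [map_mul, hx σ, hy σ]
  add_mem' := fun hx hy σ => by rw [map_add, hx σ, hy σ]
  one_mem' := fun σ => map_one _
  zero_mem' := fun σ => map_zero _
  algebraMap_mem' := fun r σ => AlgHom.commutes _ r

/-- The element `z = x_{1,n+1} + x_{2,n+1} + ⋯ + x_{n,n+1}` of `VG_n`. -/
def zVG (n : ℕ) : VG n :=
  Ideal.Quotient.mk (VGrel n)
    (∑ i : Fin n, MvPolynomial.X ⟨(i.castSucc, Fin.last n), (Fin.castSucc_lt_last i).ne⟩)

section VGchains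

set_option linter.unusedSectionVars false

variable {V A : Type} [CommRing A] [Algebra ℚ A]

/-- The product of the edges flagged `true` along the word `w` starting at `a`. -/
def VGchain (x : V → V → A) : V → List (V × Bool) → A
  | _, [] => 1
  | a, (b, true) :: w => x a b * VGchain x b w
  | _, (b, false) :: w => VGchain x b w

lemma VGchain_append (x : V → V → A) (u v : List (V × Bool)) (i : V) (f : Bool) (r : V) :
    VGchain x r (u ++ (i, f) :: v) = VGchain x r (u ++ [(i, f)]) * VGchain x i v := by
  induction u generalizing r with
  | nil => cases f <;> simp [VGchain]
  | cons p u ih =>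
    obtain ⟨b, g⟩ := p
    cases g
    · simpa [VGchain] using ih b
    · simp only [List.cons_append, VGchain, ih b, mul_assoc]

lemma VGchain_append_false (x : V → V → A) (u : List (V × Bool)) (j : V) (r : V) :
    VGchain x r (u ++ [(j, false)]) = VGchain x r u := by
  induction u generalizing r with
  | nil => simp [VGchain]
  | cons p u ih =>
    obtain ⟨b, g⟩ := p
    cases g
    · simpa [VGchain] using ih b
    · simp only [List.cons_append, VGchain, ih b]

/-- Inserting a new leaf `j` at the vertex `i`. -/
lemma VGchain_insert (x : V → V → A) (ha : ∀ a b, x a b = - x b a)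
    (har : ∀ i j k, x i j * x j k + x j k * x k i + x k i * x i j = 0)
    (v : List (V × Bool)) (i j : V) :
    ∃ L : List (List (V × Bool)), L ≠ [] ∧
      (∀ w ∈ L, (w.map Prod.fst).Perm (j :: v.map Prod.fst) ∧
        w.map Prod.snd = true :: v.map Prod.snd) ∧
      x i j * VGchain x i v = (L.map (VGchain x i)).sum := by
  induction v generalizing i with
  | nil => exact ⟨[[(j, true)]], by simp, by simp, by simp [VGchain]⟩
  | cons p v ih =>
    obtain ⟨b, g⟩ := p
    cases g
    · exact ⟨[(j, true) :: (b, false) :: v], by simp, by simp, by simp [VGchain]⟩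
    · obtain ⟨L, -, h1, h2⟩ := ih b
      refine ⟨((j, true) :: (b, true) :: v) :: L.map (fun w => (b, true) :: w), by simp, ?_, ?_⟩
      · intro w hw
        simp only [List.mem_cons, List.mem_map] at hw
        rcases hw with rfl | ⟨w, hw, rfl⟩
        · simp
        · obtain ⟨h3, h4⟩ := h1 w hw
          refine ⟨?_, by simp [h4]⟩
          simp only [List.map_cons]
          exact (h3.cons b).trans (List.Perm.swap _ _ _)
      · have e : (List.map (VGchain x i) (L.map (fun w => (b, true) :: w))).sum
            = x i b * (L.map (VGchain x b)).sum := by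
          rw [List.map_map, ← List.sum_map_mul_left]
          rfl
        simp only [List.map_cons, List.sum_cons]
        rw [e, ← h2]
        simp only [VGchain]
        linear_combination -(VGchain x b v) * (har i j b) + (VGchain x b v) * x j b * ha b i
          + (VGchain x b v) * x i j * ha b i - (VGchain x b v) * x i b * ha j b

/-- The span of all chain monomials on the vertices of `l`, starting at `r`. -/
def VGQ (x : V → V → A) (r : V) (l : List V) : Submodule ℚ A :=
  Submodule.span ℚ {y | ∃ w : List (V × Bool), (w.map Prod.fst).Perm l ∧ y = VGchain x r w}

/-- The algebra generated by edges within `r :: l`. -/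
def VGA (x : V → V → A) (r : V) (l : List V) : Subalgebra ℚ A :=
  Algebra.adjoin ℚ {y | ∃ a ∈ r :: l, ∃ b ∈ r :: l, y = x a b}

lemma VG_adjoin_le (s : Set A) (N : Submodule ℚ A) (h1 : (1 : A) ∈ N)
    (h : ∀ a ∈ s, ∀ y ∈ N, a * y ∈ N) : ∀ a ∈ Algebra.adjoin ℚ s, a ∈ N := by
  have key : ∀ a ∈ Algebra.adjoin ℚ s, ∀ y ∈ N, a * y ∈ N := by
    intro a ha
    induction ha using Algebra.adjoin_induction with
    | mem a ha => exact h a ha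
    | algebraMap q => intro y hy; rw [← Algebra.smul_def]; exact N.smul_mem _ hy
    | add a b _ _ ha hb => intro y hy; rw [add_mul]; exact N.add_mem (ha y hy) (hb y hy)
    | mul a b _ _ ha hb => intro y hy; rw [mul_assoc]; exact ha _ (hb y hy)
  intro a ha
  simpa using key a ha 1 h1

lemma VGA_step (x : V → V → A) (hs : ∀ a, x a a = 0) (ha : ∀ a b, x a b = - x b a)
    (har : ∀ i j k, x i j * x j k + x j k * x k i + x k i * x i j = 0) (r j : V) (l : List V) :
    ∀ y ∈ VGA x r (j :: l), y ∈ Submodule.span ℚ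
      {y | y ∈ VGA x r l ∨ ∃ i ∈ r :: l, ∃ q ∈ VGA x r l, y = x i j * q} := by
  set N := Submodule.span ℚ
      {y | y ∈ VGA x r l ∨ ∃ i ∈ r :: l, ∃ q ∈ VGA x r l, y = x i j * q} with hN
  have n1 : ∀ y ∈ VGA x r l, y ∈ N := fun y hy => Submodule.subset_span (Or.inl hy)
  have n2 : ∀ i ∈ r :: l, ∀ q ∈ VGA x r l, x i j * q ∈ N :=
    fun i hi q hq => Submodule.subset_span (Or.inr ⟨i, hi, q, hq, rfl⟩)
  have g : ∀ a ∈ r :: l, ∀ b ∈ r :: l, x a b ∈ VGA x r l :=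
    fun a ha b hb => Algebra.subset_adjoin ⟨a, ha, b, hb, rfl⟩
  have lift : ∀ t : A, (∀ y ∈ VGA x r l, t * y ∈ N) →
      (∀ i ∈ r :: l, ∀ q ∈ VGA x r l, t * (x i j * q) ∈ N) → ∀ y ∈ N, t * y ∈ N := by
    intro t h1 h2 y hy
    induction hy using Submodule.span_induction with
    | mem y hy =>
      rcases hy with hy | ⟨i, hi, q, hq, rfl⟩
      · exact h1 y hy
      · exact h2 i hi q hq
    | zero => simp
    | add a b _ _ ha hb => rw [mul_add]; exact N.add_mem ha hb
    | smul c a _ ha => rw [mul_smul_comm]; exact N.smul_mem _ ha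
  have m1 : ∀ b ∈ r :: l, ∀ y ∈ N, x b j * y ∈ N := by
    intro b hb
    refine lift _ (fun y hy => n2 b hb y hy) ?_
    intro i hi q hq
    have e : x b j * (x i j * q) = x b j * (x i b * q) - x i j * (x i b * q) := by
      linear_combination (-q) * har i b j + q * x b j * ha j i + q * x i b * ha j i
    rw [e]
    exact N.sub_mem (n2 b hb _ (mul_mem (g _ hi _ hb) hq)) (n2 i hi _ (mul_mem (g _ hi _ hb) hq))
  have spl : ∀ a ∈ r :: j :: l, a = j ∨ a ∈ r :: l := by
    intro a h; simp only [List.mem_cons] at h ⊢; tauto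
  refine VG_adjoin_le _ N (n1 1 (one_mem _)) ?_
  rintro _ ⟨a, ha', b, hb', rfl⟩ y hy
  rcases spl a ha' with rfl | ha1
  · rcases spl b hb' with rfl | hb1
    · rw [hs]; simp
    · rw [ha, neg_mul]; exact N.neg_mem (m1 b hb1 y hy)
  · rcases spl b hb' with rfl | hb1
    · exact m1 a ha1 y hy
    · refine lift _ (fun y hy => n1 _ (mul_mem (g _ ha1 _ hb1) hy)) ?_ y hy
      intro i hi q hq
      rw [mul_left_comm]
      exact n2 i hi _ (mul_mem (g _ ha1 _ hb1) hq)

lemma VGA_le_Q (x : V → V → A) (hs : ∀ a, x a a = 0) (ha : ∀ a b, x a b = - x b a)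
    (har : ∀ i j k, x i j * x j k + x j k * x k i + x k i * x i j = 0) (r : V) (l : List V) :
    ∀ y ∈ VGA x r l, y ∈ VGQ x r l := by
  induction l with
  | nil =>
    refine VG_adjoin_le _ _ (Submodule.subset_span ⟨[], by simp, rfl⟩) ?_
    rintro _ ⟨a, ha, b, hb, rfl⟩ y hy
    simp only [List.mem_singleton] at ha hb
    subst ha hb
    rw [hs]; simp
  | cons j l ih =>
    intro y hy
    have := VGA_step x hs ha har r j l y hy
    refine (Submodule.span_le.mpr ?_) this
    rintro y (hy | ⟨i, hi, q, hq, rfl⟩)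
    · have := ih y hy
      refine (Submodule.span_le.mpr ?_) this
      rintro _ ⟨w, hw, rfl⟩
      refine Submodule.subset_span ⟨w ++ [(j, false)], ?_, (VGchain_append_false x w j r).symm⟩
      simp only [List.map_append, List.map_cons, List.map_nil]
      exact (List.perm_append_singleton _ _).trans (hw.cons j)
    · have hq := ih q hq
      have : VGQ x r l ≤ (VGQ x r (j :: l)).comap (LinearMap.mulLeft ℚ (x i j)) := by
        refine Submodule.span_le.mpr ?_
        rintro _ ⟨w, hw, rfl⟩
        simp only [SetLike.mem_coe, Submodule.mem_comap, LinearMap.mulLeft_apply]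
        have hi' : i = r ∨ i ∈ w.map Prod.fst := by
          rcases List.mem_cons.mp hi with h | h
          · exact Or.inl h
          · exact Or.inr (hw.mem_iff.mpr h)
        rcases hi' with rfl | hi'
        · obtain ⟨L, -, h1, h2⟩ := VGchain_insert x ha har w i j
          rw [h2]
          refine list_sum_mem ?_
          intro y hy
          obtain ⟨w', hw', rfl⟩ := List.mem_map.mp hy
          exact Submodule.subset_span ⟨w', (h1 w' hw').1.trans (hw.cons j), rfl⟩
        · obtain ⟨⟨i', f⟩, hif, rfl⟩ := List.mem_map.mp hi'
          obtain ⟨u, v, rfl⟩ := List.append_of_mem hif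
          obtain ⟨L, -, h1, h2⟩ := VGchain_insert x ha har v i' j
          rw [VGchain_append]
          simp only
          rw [mul_left_comm, h2, ← List.sum_map_mul_left]
          refine list_sum_mem ?_
          intro y hy
          obtain ⟨w', hw', rfl⟩ := List.mem_map.mp hy
          refine Submodule.subset_span ⟨u ++ (i', f) :: w', ?_, (VGchain_append x u w' i' f r).symm⟩
          refine List.Perm.trans ?_ (hw.cons j)
          simp only [List.map_append, List.map_cons]
          refine ((((h1 w' hw').1.cons i').append_left _).trans ?_)
          refine ((List.Perm.swap _ _ _).append_left _).trans ?_
          exact List.perm_middle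
      exact this hq

lemma VGchain_map {B : Type} [CommRing B] [Algebra ℚ B] (φ : A →ₐ[ℚ] B) (σ : V → V)
    (x : V → V → A) (y : V → V → B)
    (h : ∀ a b, φ (x a b) = y (σ a) (σ b)) (w : List (V × Bool)) (r : V) :
    φ (VGchain x r w) = VGchain y (σ r) (w.map (fun p => (σ p.1, p.2))) := by
  induction w generalizing r with
  | nil => simp [VGchain]
  | cons p w ih =>
    obtain ⟨b, g⟩ := p
    cases g <;> simp [VGchain, ih, h]

/-- Averaging kills chain monomials with a nontrivial block away from the root. -/
lemma VGchain_kill {M : Type} [AddCommGroup M] [Module ℚ M] (R : A →ₗ[ℚ] M) (x : V → V → A)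
    (ha : ∀ a b, x a b = - x b a)
    (har : ∀ i j k, x i j * x j k + x j k * x k i + x k i * x i j = 0) (r : V) (l : List V)
    (hR : ∀ w w' : List (V × Bool), (w.map Prod.fst).Perm l → (w'.map Prod.fst).Perm l →
      w.map Prod.snd = w'.map Prod.snd → R (VGchain x r w) = R (VGchain x r w'))
    (u v : List (V × Bool)) (b a : V)
    (hw : ((u ++ (b, false) :: (a, true) :: v).map Prod.fst).Perm l) :
    R (VGchain x r (u ++ (b, false) :: (a, true) :: v)) = 0 := by
  obtain ⟨L, hL, h1, h2⟩ := VGchain_insert x ha har v a b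
  have e : VGchain x r (u ++ (b, false) :: (a, true) :: v) =
      - (L.map (fun w => VGchain x r (u ++ (a, false) :: w))).sum := by
    have : (fun w => VGchain x r (u ++ (a, false) :: w)) = fun w =>
        VGchain x r u * VGchain x a w := by
      funext w; rw [VGchain_append, VGchain_append_false]
    rw [this, List.sum_map_mul_left, ← h2, VGchain_append, VGchain_append_false, VGchain, ha b a]
    ring
  have e2 : ∀ w ∈ L, R (VGchain x r (u ++ (a, false) :: w)) =
      R (VGchain x r (u ++ (b, false) :: (a, true) :: v)) := by
    intro w hwL
    obtain ⟨h3, h4⟩ := h1 w hwL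
    refine hR _ _ ?_ hw (by simp [h4])
    refine List.Perm.trans ?_ hw
    simp only [List.map_append, List.map_cons]
    exact ((h3.cons a).trans (List.Perm.swap _ _ _)).append_left _
  have e3 := congrArg R e
  rw [map_neg, map_list_sum, List.map_map, List.map_congr_left (f := R ∘ fun w => VGchain x r (u ++ (a, false) :: w)) (g := fun _ =>
    R (VGchain x r (u ++ (b, false) :: (a, true) :: v))) (fun w hw => e2 w hw)] at e3
  rw [List.map_const', List.sum_replicate] at e3
  set t := R (VGchain x r (u ++ (b, false) :: (a, true) :: v))
  have e4 : ((L.length : ℚ) + 1) • t = 0 := by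
    rw [add_smul, one_smul, Nat.cast_smul_eq_nsmul]
    nth_rewrite 2 [e3]
    simp
  rcases smul_eq_zero.mp e4 with h | h
  · exact absurd h (by positivity)
  · exact h

lemma VG_flags (f : List Bool) : (∃ k, k ≤ f.length ∧
      f = List.replicate k true ++ List.replicate (f.length - k) false) ∨
    ∃ u v, f = u ++ false :: true :: v := by
  induction f with
  | nil => exact Or.inl ⟨0, by simp⟩
  | cons b f ih =>
    rcases ih with ⟨k, hk, h⟩ | ⟨u, v, rfl⟩
    · cases b
      · rcases k with _ | k
        · left; refine ⟨0, by simp, ?_⟩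
          simp only [List.replicate_zero, List.nil_append, Nat.sub_zero, List.length_cons,
            List.replicate_succ] at h ⊢
          rw [← h]
        · right; refine ⟨[], List.replicate k true ++ List.replicate (f.length - (k+1)) false, ?_⟩
          rw [List.nil_append]
          nth_rewrite 1 [h]
          simp [List.replicate_succ]
      · left; refine ⟨k + 1, by simpa using hk, ?_⟩
        nth_rewrite 1 [h]
        simp [List.replicate_succ]
    · right; exact ⟨b :: u, v, by simp⟩

/-- Sums of square-zero elements. -/
lemma VG_sum_pow {ι : Type} [DecidableEq ι] (y : ι → A) (hy : ∀ i, y i ^ 2 = 0) (s : Finset ι) :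
    (∑ i ∈ s, y i) ^ s.card = (s.card.factorial : A) * ∏ i ∈ s, y i ∧
    (∑ i ∈ s, y i) ^ (s.card + 1) = 0 := by
  induction s using Finset.induction_on with
  | empty => simp
  | insert a s ha ih =>
    obtain ⟨h1, h2⟩ := ih
    have key : ∀ m : ℕ, ∀ t : A, (y a + t) ^ (m + 1) = t ^ (m + 1) + (m + 1 : A) * t ^ m * y a := by
      intro m t
      induction m with
      | zero => simp; ring
      | succ m ihm =>
        rw [pow_succ, ihm]
        push_cast
        linear_combination ((m + 1 : A) * t ^ m) * hy a
    rw [Finset.sum_insert ha, Finset.prod_insert ha, Finset.card_insert_of_notMem ha]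
    constructor
    · rw [key, h2, h1, Nat.factorial_succ]; push_cast; ring
    · rw [key, pow_succ, h2]; simp

end VGchains

/-- The generators of `VG_n`, extended by zero on the diagonal. -/
def VGx (n : ℕ) (a b : Fin (n+1)) : VG n :=
  if h : a ≠ b then Ideal.Quotient.mk (VGrel n) (MvPolynomial.X ⟨(a, b), h⟩) else 0

lemma VGx_of_ne {n : ℕ} {a b : Fin (n+1)} (h : a ≠ b) :
    VGx n a b = Ideal.Quotient.mk (VGrel n) (MvPolynomial.X ⟨(a, b), h⟩) := dif_pos h

lemma VGx_self (n : ℕ) (a : Fin (n+1)) : VGx n a a = 0 := dif_neg (by simp)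

lemma VGx_sq (n : ℕ) (a b : Fin (n+1)) : VGx n a b ^ 2 = 0 := by
  by_cases h : a = b
  · subst h; simp [VGx_self]
  · rw [VGx_of_ne h, ← map_pow]
    exact Ideal.Quotient.eq_zero_iff_mem.mpr (Ideal.subset_span (Or.inl (Or.inl ⟨_, rfl⟩)))

lemma VGx_anti (n : ℕ) (a b : Fin (n+1)) : VGx n a b = - VGx n b a := by
  by_cases h : a = b
  · subst h; simp [VGx_self]
  · rw [eq_neg_iff_add_eq_zero, VGx_of_ne h, VGx_of_ne (Ne.symm h), ← map_add]
    exact Ideal.Quotient.eq_zero_iff_mem.mpr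
      (Ideal.subset_span (Or.inl (Or.inr ⟨a, b, h, rfl⟩)))

lemma VGx_arnold (n : ℕ) (i j k : Fin (n+1)) :
    VGx n i j * VGx n j k + VGx n j k * VGx n k i + VGx n k i * VGx n i j = 0 := by
  by_cases h1 : i = j
  · subst h1
    linear_combination (-1 : VG n) * VGx_sq n k i + VGx n k i * VGx_anti n i k
      + (VGx n i k + VGx n k i) * VGx_self n i
  by_cases h2 : j = k
  · subst h2
    linear_combination (-1 : VG n) * VGx_sq n i j + VGx n i j * VGx_anti n j i
      + (VGx n i j + VGx n j i) * VGx_self n j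
  by_cases h3 : k = i
  · subst h3
    linear_combination (-1 : VG n) * VGx_sq n k j + VGx n k j * VGx_anti n j k
      + (VGx n j k + VGx n k j) * VGx_self n k
  rw [VGx_of_ne h1, VGx_of_ne h2, VGx_of_ne h3]
  simp only [← map_mul, ← map_add]
  exact Ideal.Quotient.eq_zero_iff_mem.mpr
    (Ideal.subset_span (Or.inr ⟨i, j, k, h1, h2, h3, rfl⟩))

lemma VGperm_x (n : ℕ) (σ : Equiv.Perm (Fin (n+1))) (a b : Fin (n+1)) :
    VGperm n σ (VGx n a b) = VGx n (σ a) (σ b) := by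
  by_cases h : a = b
  · subst h; simp [VGx_self]
  · have h' : σ a ≠ σ b := fun e => h (σ.injective e)
    rw [VGx_of_ne h, VGx_of_ne h']
    simp only [VGperm]
    erw [Ideal.Quotient.liftₐ_apply, Ideal.Quotient.lift_mk]
    simp [VGpermIdx]

lemma VG_hom_ext {n : ℕ} {B : Type} [CommRing B] [Algebra ℚ B] (f g : VG n →ₐ[ℚ] B)
    (h : ∀ a b, f (VGx n a b) = g (VGx n a b)) : f = g := by
  apply Ideal.Quotient.algHom_ext
  apply MvPolynomial.algHom_ext
  rintro ⟨⟨a, b⟩, hab⟩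
  have := h a b
  rw [VGx_of_ne hab] at this
  exact this

lemma VGperm_comp (n : ℕ) (σ τ : Equiv.Perm (Fin (n+1))) (v : VG n) :
    VGperm n σ (VGperm n τ v) = VGperm n (σ * τ) v := by
  have : (VGperm n σ).comp (VGperm n τ) = VGperm n (σ * τ) := by
    apply VG_hom_ext
    intro a b
    simp [VGperm_x]
  exact DFunLike.congr_fun this v

open Classical in
/-- The stabilizer of the root, as a finset. -/
def VGstab (n : ℕ) : Finset (Equiv.Perm (Fin (n+1))) :=
  Finset.univ.filter (fun σ => σ (Fin.last n) = Fin.last n)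

/-- The (unnormalized) averaging operator. -/
def VGrey (n : ℕ) : VG n →ₗ[ℚ] VG n := ∑ σ ∈ VGstab n, (VGperm n σ).toLinearMap

lemma VGrey_apply (n : ℕ) (v : VG n) : VGrey n v = ∑ σ ∈ VGstab n, VGperm n σ v := by
  simp [VGrey]

lemma VGrey_perm (n : ℕ) (τ : Equiv.Perm (Fin (n+1))) (hτ : τ (Fin.last n) = Fin.last n)
    (v : VG n) : VGrey n (VGperm n τ v) = VGrey n v := by
  rw [VGrey_apply, VGrey_apply]
  simp only [VGperm_comp]
  have hτ' : τ⁻¹ (Fin.last n) = Fin.last n := by rw [Equiv.Perm.inv_eq_iff_eq, hτ]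
  refine Finset.sum_bij (fun σ _ => σ * τ) ?_ ?_ ?_ ?_
  · intro σ hσ
    simp only [VGstab, Finset.mem_filter, Finset.mem_univ, true_and] at hσ ⊢
    simp [hτ, hσ]
  · intro a _ b _ h
    exact mul_right_cancel h
  · intro σ hσ
    refine ⟨σ * τ⁻¹, ?_, by simp⟩
    simp only [VGstab, Finset.mem_filter, Finset.mem_univ, true_and] at hσ ⊢
    rw [Equiv.Perm.mul_apply, hτ', hσ]
  · intros; rfl

lemma VGrey_inv (n : ℕ) (v : VG n) (hv : v ∈ VGinv n) :
    VGrey n v = ((VGstab n).card : ℚ) • v := by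
  rw [VGrey_apply, Finset.sum_congr rfl (g := fun _ => v)]
  · simp [Nat.cast_smul_eq_nsmul]
  · intro σ hσ
    simp only [VGstab, Finset.mem_filter, Finset.mem_univ, true_and] at hσ
    exact hv σ hσ

/-- A permutation taking one enumeration to another. -/
lemma VG_exists_perm {α : Type} [DecidableEq α] (l l' : List α) (h : l.Nodup) (h' : l'.Nodup)
    (hm : ∀ a, a ∈ l) (hm' : ∀ a, a ∈ l') (hl : l.length = l'.length) :
    ∃ σ : Equiv.Perm α, l.map σ = l' := by
  refine ⟨(h.getEquivOfForallMemList l hm).symm.trans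
    ((finCongr hl).trans (h'.getEquivOfForallMemList l' hm')), ?_⟩
  apply List.ext_getElem
  · simpa using hl
  · intro i h1 h2
    simp only [List.getElem_map, Equiv.trans_apply]
    have : (h.getEquivOfForallMemList l hm).symm l[i] = ⟨i, by simpa using h1⟩ := by
      rw [Equiv.symm_apply_eq]; simp
    rw [this]; simp

/-- The non-root vertices. -/
def VGverts (n : ℕ) : List (Fin (n+1)) := (List.finRange n).map Fin.castSucc

lemma VGverts_nodup (n : ℕ) : (Fin.last n :: VGverts n).Nodup := by
  rw [List.nodup_cons]
  constructor
  · simp [VGverts, Fin.castSucc_ne_last]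
  · exact (List.nodup_finRange n).map (Fin.castSucc_injective n)

lemma VGverts_mem (n : ℕ) (a : Fin (n+1)) : a ∈ Fin.last n :: VGverts n := by
  induction a using Fin.lastCases with
  | last => simp
  | cast i => simp [VGverts]

lemma VGverts_length (n : ℕ) : (VGverts n).length = n := by simp [VGverts]

lemma VGrey_chain_eq (n : ℕ) (w w' : List (Fin (n+1) × Bool))
    (hw : (w.map Prod.fst).Perm (VGverts n)) (hw' : (w'.map Prod.fst).Perm (VGverts n))
    (h : w.map Prod.snd = w'.map Prod.snd) :
    VGrey n (VGchain (VGx n) (Fin.last n) w) = VGrey n (VGchain (VGx n) (Fin.last n) w') := by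
  have hlen : w.length = w'.length := by simpa using congrArg List.length h
  obtain ⟨σ, hσ⟩ := VG_exists_perm (Fin.last n :: w.map Prod.fst) (Fin.last n :: w'.map Prod.fst)
    ((hw.cons _).nodup_iff.mpr (VGverts_nodup n)) ((hw'.cons _).nodup_iff.mpr (VGverts_nodup n))
    (fun a => (hw.cons _).mem_iff.mpr (VGverts_mem n a))
    (fun a => (hw'.cons _).mem_iff.mpr (VGverts_mem n a)) (by simpa using hlen)
  simp only [List.map_cons, List.cons.injEq] at hσ
  obtain ⟨h1, h2⟩ := hσ
  rw [← VGrey_perm n σ h1, VGchain_map (VGperm n σ) σ (VGx n) (VGx n) (VGperm_x n σ), h1]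
  congr 2
  apply List.ext_getElem
  · simpa using hlen
  · intro i hi hi'
    have a1 := List.getElem_of_eq h2 (i := i) (by simpa using hi)
    have a2 := List.getElem_of_eq h (i := i) (by simpa using hi)
    simp only [List.getElem_map] at a1 a2 ⊢
    exact Prod.ext a1 a2

/-- Standard words. -/
def VGword (n k : ℕ) : List (Fin (n+1) × Bool) :=
  (VGverts n).zip (List.replicate k true ++ List.replicate (n - k) false)

lemma VGA_top (n : ℕ) (v : VG n) : v ∈ VGA (VGx n) (Fin.last n) (VGverts n) := by
  obtain ⟨p, rfl⟩ := Ideal.Quotient.mk_surjective v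
  induction p using MvPolynomial.induction_on with
  | C a =>
    exact Subalgebra.algebraMap_mem _ a
  | add p q hp hq => rw [map_add]; exact add_mem hp hq
  | mul_X p i hp =>
    rw [map_mul]
    refine mul_mem hp ?_
    obtain ⟨⟨a, b⟩, hab⟩ := i
    rw [← VGx_of_ne hab]
    exact Algebra.subset_adjoin ⟨a, VGverts_mem n a, b, VGverts_mem n b, rfl⟩

lemma VGrey_mem_span (n : ℕ) (v : VG n) : VGrey n v ∈ Submodule.span ℚ
    (Set.range (fun k : Fin (n+1) => VGrey n (VGchain (VGx n) (Fin.last n) (VGword n k)))) := by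
  have hv := VGA_le_Q (VGx n) (VGx_self n) (VGx_anti n) (VGx_arnold n) _ _ v (VGA_top n v)
  rw [← Submodule.mem_comap]
  refine (Submodule.span_le.mpr ?_) hv
  rintro _ ⟨w, hw, rfl⟩
  simp only [SetLike.mem_coe, Submodule.mem_comap]
  have hlen : w.length = n := by simpa [VGverts_length] using hw.length_eq
  rcases VG_flags (w.map Prod.snd) with ⟨k, hk, h⟩ | ⟨u, v, h⟩
  · rw [List.length_map, hlen] at hk h
    refine Submodule.subset_span ⟨⟨k, by omega⟩, ?_⟩
    have l1 : (VGverts n).length ≤ (List.replicate k true ++ List.replicate (n - k) false).length := by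
      simp [VGverts_length]; omega
    have l2 : (List.replicate k true ++ List.replicate (n - k) false).length ≤ (VGverts n).length := by
      simp [VGverts_length]; omega
    apply VGrey_chain_eq
    · simp only [VGword]
      rw [List.map_fst_zip l1]
    · exact hw
    · simp only [VGword]
      rw [List.map_snd_zip l2, h]
  · obtain ⟨w1, w2, rfl, rfl, h2⟩ := List.map_eq_append_iff.mp h
    obtain ⟨⟨b, f⟩, w3, rfl, hf, h3⟩ := List.map_eq_cons_iff.mp h2
    obtain ⟨⟨a, g⟩, w4, rfl, hg, h4⟩ := List.map_eq_cons_iff.mp h3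
    simp only at hf hg
    subst hf hg
    rw [VGchain_kill (VGrey n) (VGx n) (VGx_anti n) (VGx_arnold n) (Fin.last n) (VGverts n)
      (VGrey_chain_eq n) _ _ _ _ hw]
    exact Submodule.zero_mem _

lemma VGinv_le_span (n : ℕ) : Subalgebra.toSubmodule (VGinv n) ≤ Submodule.span ℚ
    (Set.range (fun k : Fin (n+1) => VGrey n (VGchain (VGx n) (Fin.last n) (VGword n k)))) := by
  intro v hv
  have h := VGrey_mem_span n v
  rw [VGrey_inv n v hv] at h
  have hc : ((VGstab n).card : ℚ) ≠ 0 := by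
    have : (1 : Equiv.Perm (Fin (n+1))) ∈ VGstab n := by simp [VGstab]
    exact_mod_cast (Finset.card_pos.mpr ⟨_, this⟩).ne'
  exact (Submodule.smul_mem_iff _ hc).mp h

lemma VGinv_finite (n : ℕ) : FiniteDimensional ℚ (VGinv n) ∧ Module.finrank ℚ (VGinv n) ≤ n + 1 := by
  set S := Submodule.span ℚ
    (Set.range (fun k : Fin (n+1) => VGrey n (VGchain (VGx n) (Fin.last n) (VGword n k)))) with hS
  have : FiniteDimensional ℚ S := FiniteDimensional.span_of_finite ℚ (Set.finite_range _)
  have f1 : FiniteDimensional ℚ (Subalgebra.toSubmodule (VGinv n)) :=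
    Submodule.finiteDimensional_of_le (VGinv_le_span n)
  refine ⟨f1, ?_⟩
  have h1 : Module.finrank ℚ (Subalgebra.toSubmodule (VGinv n)) ≤ Module.finrank ℚ S :=
    Submodule.finrank_mono (VGinv_le_span n)
  have h2 : Module.finrank ℚ S ≤ n + 1 := by
    have h3 := finrank_range_le_card (R := ℚ)
      (fun k : Fin (n+1) => VGrey n (VGchain (VGx n) (Fin.last n) (VGword n k)))
    rw [Fintype.card_fin] at h3
    exact h3
  exact h1.trans h2

lemma zVG_eq (n : ℕ) : zVG n = ∑ i : Fin n, VGx n i.castSucc (Fin.last n) := by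
  rw [zVG, map_sum]
  exact Finset.sum_congr rfl (fun i _ => (VGx_of_ne _).symm)

lemma zVG_eq' (n : ℕ) : zVG n = ∑ i : Fin (n+1), VGx n i (Fin.last n) := by
  rw [zVG_eq, Fin.sum_univ_castSucc, VGx_self, add_zero]

lemma zVG_mem (n : ℕ) : zVG n ∈ VGinv n := by
  intro σ hσ
  rw [zVG_eq', map_sum]
  simp only [VGperm_x, hσ]
  exact Equiv.sum_comp σ (fun i => VGx n i (Fin.last n))

lemma zVG_pow_succ (n : ℕ) : zVG n ^ (n+1) = 0 := by
  have := (VG_sum_pow (fun i : Fin n => VGx n i.castSucc (Fin.last n))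
    (fun i => VGx_sq n _ _) Finset.univ).2
  rw [zVG_eq]
  simpa using this

/-- The ideal generated by the squares of the variables. -/
def VGsqIdeal (n : ℕ) : Ideal (MvPolynomial (Fin (n+1)) ℚ) :=
  Ideal.span ((fun s => MvPolynomial.monomial s (1 : ℚ)) ''
    (Set.range (fun i : Fin (n+1) => Finsupp.single i 2)))

/-- The square-zero variables. -/
def VGy (n : ℕ) (i : Fin (n+1)) : MvPolynomial (Fin (n+1)) ℚ ⧸ VGsqIdeal n :=
  Ideal.Quotient.mk (VGsqIdeal n) (MvPolynomial.X i)

lemma VGy_sq (n : ℕ) (i : Fin (n+1)) : VGy n i ^ 2 = 0 := by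
  rw [VGy, ← map_pow]
  refine Ideal.Quotient.eq_zero_iff_mem.mpr (Ideal.subset_span ⟨_, ⟨i, rfl⟩, ?_⟩)
  simp [MvPolynomial.X_pow_eq_monomial]

lemma VGy_prod (n : ℕ) : (n.factorial : MvPolynomial (Fin (n+1)) ℚ ⧸ VGsqIdeal n) *
    ∏ i : Fin n, VGy n i.castSucc ≠ 0 := by
  have e : (n.factorial : MvPolynomial (Fin (n+1)) ℚ ⧸ VGsqIdeal n) *
      ∏ i : Fin n, VGy n i.castSucc = Ideal.Quotient.mk (VGsqIdeal n)
        (MvPolynomial.monomial (∑ i : Fin n, Finsupp.single i.castSucc 1) (n.factorial : ℚ)) := by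
    simp only [VGy]
    rw [← map_prod, ← map_natCast (Ideal.Quotient.mk (VGsqIdeal n)), ← map_mul]
    congr 1
    have : (MvPolynomial.monomial (∑ i : Fin n, Finsupp.single i.castSucc 1) (n.factorial : ℚ))
      = MvPolynomial.C (n.factorial : ℚ) *
        MvPolynomial.monomial (∑ i : Fin n, Finsupp.single i.castSucc 1) (1 : ℚ) := by
      rw [MvPolynomial.C_mul_monomial, mul_one]
    rw [this, MvPolynomial.monomial_sum_one]
    simp [MvPolynomial.X]
  rw [e, Ne, Ideal.Quotient.eq_zero_iff_mem, VGsqIdeal,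
    MvPolynomial.mem_ideal_span_monomial_image]
  intro h
  have hn : (n.factorial : ℚ) ≠ 0 := by exact_mod_cast n.factorial_ne_zero
  obtain ⟨_, ⟨i, rfl⟩, hi⟩ := h (∑ i : Fin n, Finsupp.single i.castSucc 1) (by
    rw [MvPolynomial.mem_support_iff, MvPolynomial.coeff_monomial, if_pos rfl]; exact hn)
  have := hi i
  rw [Finsupp.single_eq_same, Finsupp.finsetSum_apply] at this
  induction i using Fin.lastCases with
  | last => simp [Finsupp.single_apply, Fin.castSucc_ne_last] at this
  | cast i => simp [Finsupp.single_apply] at this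

/-- The evaluation of generators: `x_{ij}` goes to the variable of the smaller index, signed. -/
def VGev (n : ℕ) (a b : Fin (n+1)) : MvPolynomial (Fin (n+1)) ℚ ⧸ VGsqIdeal n :=
  if a < b then VGy n a else - VGy n b

lemma VG_exists_hom (n : ℕ) : ∃ φ : VG n →ₐ[ℚ] (MvPolynomial (Fin (n+1)) ℚ ⧸ VGsqIdeal n),
    ∀ a b, a < b → φ (VGx n a b) = VGy n a := by
  let φ0 : MvPolynomial (VGidx n) ℚ →ₐ[ℚ] (MvPolynomial (Fin (n+1)) ℚ ⧸ VGsqIdeal n) :=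
    MvPolynomial.aeval (fun v : VGidx n => VGev n v.1.1 v.1.2)
  have hsq := VGy_sq n
  have h0 : ∀ p ∈ VGrel n, φ0 p = 0 := by
    intro p hp
    have : VGrel n ≤ RingHom.ker φ0 := by
      rw [VGrel, Ideal.span_le]
      rintro q ((⟨v, rfl⟩ | ⟨i, j, hij, rfl⟩) | ⟨i, j, k, hij, hjk, hki, rfl⟩)
      · simp only [SetLike.mem_coe, RingHom.mem_ker, φ0, map_pow, MvPolynomial.aeval_X, VGev]
        split_ifs
        · exact hsq _
        · exact (neg_sq (VGy n v.1.2)).trans (hsq _)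
      · simp only [SetLike.mem_coe, RingHom.mem_ker, φ0, map_add, MvPolynomial.aeval_X, VGev]
        rcases lt_or_gt_of_ne hij with h | h
        · simp [h, h.not_gt]
        · simp [h, h.not_gt]
      · simp only [SetLike.mem_coe, RingHom.mem_ker, φ0, map_add, map_mul, MvPolynomial.aeval_X,
          VGev]
        have hi := hsq i
        have hj := hsq j
        have hk := hsq k
        split_ifs <;> first | (exfalso; omega) | linear_combination hi | linear_combination hj | linear_combination hk | linear_combination -hi | linear_combination -hj | linear_combination -hk
    exact this hp
  refine ⟨Ideal.Quotient.liftₐ (VGrel n) φ0 h0, ?_⟩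
  intro a b hab
  rw [VGx_of_ne hab.ne]
  erw [Ideal.Quotient.liftₐ_apply, Ideal.Quotient.lift_mk]
  simp [φ0, VGev, hab]

lemma zVG_pow_ne (n : ℕ) : zVG n ^ n ≠ 0 := by
  obtain ⟨φ, hφ⟩ := VG_exists_hom n
  intro h
  have h1 := congrArg φ h
  rw [map_pow, zVG_eq, map_sum, map_zero] at h1
  have := (VG_sum_pow (fun i : Fin n => VGy n i.castSucc) (fun i => VGy_sq n _) Finset.univ).1
  simp only [Finset.card_univ, Fintype.card_fin] at this
  rw [Finset.sum_congr rfl (fun i _ => hφ _ _ (Fin.castSucc_lt_last i)), this] at h1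
  exact VGy_prod n h1

lemma VG_aeval_ker {B : Type} [CommRing B] [Algebra ℚ B] (z : B) (n : ℕ) (h1 : z ^ (n+1) = 0)
    (h2 : z ^ n ≠ 0) (p : Polynomial ℚ) (hp : Polynomial.aeval z p = 0) :
    Polynomial.X ^ (n+1) ∣ p := by
  rw [Polynomial.X_pow_dvd_iff]
  intro d hd
  induction d using Nat.strong_induction_on with
  | _ d ih =>
    have hdvd : Polynomial.X ^ d ∣ p := by
      rw [Polynomial.X_pow_dvd_iff]
      intro e he
      exact ih e he (by omega)
    obtain ⟨q, rfl⟩ := hdvd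
    have hq : q = Polynomial.X * q.divX + Polynomial.C (q.coeff 0) := (Polynomial.X_mul_divX_add q).symm
    have hc : (Polynomial.X ^ d * q).coeff d = q.coeff 0 := by
      simpa using Polynomial.coeff_X_pow_mul q d 0
    rw [hc]
    have e1 : z ^ (n - d) * Polynomial.aeval z (Polynomial.X ^ d * q) = (q.coeff 0) • z ^ n := by
      rw [hq]
      simp only [map_mul, map_pow, map_add, Polynomial.aeval_X, Polynomial.aeval_C]
      have e2 : z ^ n = z ^ (n - d) * z ^ d := by rw [← pow_add]; congr 1; omega
      have e3 : z ^ (n - d) * z ^ d * z = 0 := by rw [← e2, ← pow_succ, h1]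
      rw [e2, Algebra.smul_def]
      simp only [Polynomial.coeff_add, Polynomial.coeff_X_mul_zero, Polynomial.coeff_C_zero, zero_add]
      linear_combination (Polynomial.aeval z q.divX) * e3
    rw [hp, mul_zero] at e1
    rcases smul_eq_zero.mp e1.symm with h | h
    · exact h
    · exact absurd h h2

/-- For every integer `n ≥ 2`, the invariant subalgebra `VG_n^{S_n}` is
isomorphic as a `ℚ`-algebra to `ℚ[T]/⟨T^{n+1}⟩`. -/
theorem VGinv_iso_truncated_polynomial (n : ℕ) (hn : 2 ≤ n) :
    Nonempty ((VGinv n) ≃ₐ[ℚ] (Polynomial ℚ ⧸ Ideal.span {(Polynomial.X : Polynomial ℚ) ^ (n+1)})) := by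
  let z : VGinv n := ⟨zVG n, zVG_mem n⟩
  have hz1 : z ^ (n+1) = 0 := Subtype.ext (by simpa [z] using zVG_pow_succ n)
  have hz2 : z ^ n ≠ 0 := by
    intro h
    apply zVG_pow_ne n
    simpa [z] using congrArg Subtype.val h
  let ψ : (Polynomial ℚ ⧸ Ideal.span {(Polynomial.X : Polynomial ℚ) ^ (n+1)}) →ₐ[ℚ] VGinv n :=
    Ideal.Quotient.liftₐ _ (Polynomial.aeval z) (by
      intro a ha
      obtain ⟨q, rfl⟩ := Ideal.mem_span_singleton.mp ha
      simp [hz1])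
  have hinj : Function.Injective ψ := by
    rw [injective_iff_map_eq_zero]
    intro a ha
    obtain ⟨p, rfl⟩ := Ideal.Quotient.mk_surjective a
    have ha' : Polynomial.aeval z p = 0 := ha
    exact Ideal.Quotient.eq_zero_iff_mem.mpr
      (Ideal.mem_span_singleton.mpr (VG_aeval_ker z n hz1 hz2 p ha'))
  obtain ⟨hfin, hle⟩ := VGinv_finite n
  have hrank : Module.finrank ℚ
      (Polynomial ℚ ⧸ Ideal.span {(Polynomial.X : Polynomial ℚ) ^ (n+1)}) = n + 1 := by
    have := (AdjoinRoot.powerBasis' (Polynomial.monic_X_pow (R := ℚ) (n+1))).finrank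
    rw [AdjoinRoot.powerBasis'_dim, Polynomial.natDegree_X_pow] at this
    exact this
  have hfin2 : FiniteDimensional ℚ
      (Polynomial ℚ ⧸ Ideal.span {(Polynomial.X : Polynomial ℚ) ^ (n+1)}) :=
    FiniteDimensional.of_finrank_pos (by omega)
  have hle2 := LinearMap.finrank_le_finrank_of_injective (f := ψ.toLinearMap) hinj
  have hsurj : Function.Surjective ψ :=
    (LinearMap.injective_iff_surjective_of_finrank_eq_finrank (f := ψ.toLinearMap)
      (by omega)).mp hinj
  exact ⟨(AlgEquiv.ofBijective ψ ⟨hinj, hsurj⟩).symm⟩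

end
end

section
/- For every integer n ≥ 2, the ℚ-vector space VG_n^{S_{n+1}} of S_{n+1}-invariant elements of VG_n has dimension 1. -/
noncomputable section

set_option synthInstance.maxHeartbeats 1000000


/-! ### Helper lemmas -/

/-- The class of `x_{ij}`, extended by `0` on the diagonal. -/
def vgX (n : ℕ) (i j : Fin (n+1)) : VG n :=
  if h : i ≠ j then Ideal.Quotient.mk (VGrel n) (MvPolynomial.X ⟨(i,j),h⟩) else 0

lemma vgX_self (n : ℕ) (i : Fin (n+1)) : vgX n i i = 0 := by simp [vgX]

lemma vgX_sq (n : ℕ) (i j : Fin (n+1)) : vgX n i j * vgX n i j = 0 := by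
  by_cases h : i = j
  · subst h; simp [vgX_self]
  · rw [vgX, dif_pos h, ← map_mul, Ideal.Quotient.eq_zero_iff_mem, ← pow_two]
    exact Ideal.subset_span (Or.inl (Or.inl ⟨_, rfl⟩))

lemma vgX_anti (n : ℕ) (i j : Fin (n+1)) : vgX n i j + vgX n j i = 0 := by
  by_cases h : i = j
  · subst h; simp [vgX_self]
  · rw [vgX, vgX, dif_pos h, dif_pos (Ne.symm h), ← map_add, Ideal.Quotient.eq_zero_iff_mem]
    exact Ideal.subset_span (Or.inl (Or.inr ⟨i, j, h, rfl⟩))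

lemma vgX_arnold (n : ℕ) (i j k : Fin (n+1)) :
    vgX n i j * vgX n j k + vgX n j k * vgX n k i + vgX n k i * vgX n i j = 0 := by
  by_cases hij : i = j
  · subst hij
    have h1 := vgX_anti n i k
    have h2 := vgX_sq n i k
    rw [vgX_self]
    linear_combination vgX n i k * h1 - h2
  by_cases hjk : j = k
  · subst hjk
    have h1 := vgX_anti n i j
    have h2 := vgX_sq n i j
    rw [vgX_self]
    linear_combination vgX n i j * h1 - h2
  by_cases hki : k = i
  · subst hki
    have h1 := vgX_anti n k j
    have h2 := vgX_sq n k j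
    rw [vgX_self]
    linear_combination vgX n k j * h1 - h2
  · rw [vgX, vgX, vgX, dif_pos hij, dif_pos hjk, dif_pos hki, ← map_mul, ← map_mul, ← map_mul,
      ← map_add, ← map_add, Ideal.Quotient.eq_zero_iff_mem]
    exact Ideal.subset_span (Or.inr ⟨i, j, k, hij, hjk, hki, rfl⟩)

lemma VGperm_mk (n : ℕ) (σ : Equiv.Perm (Fin (n+1))) (p : MvPolynomial (VGidx n) ℚ) :
    VGperm n σ (Ideal.Quotient.mk (VGrel n) p) =
      Ideal.Quotient.mk (VGrel n) (MvPolynomial.rename (VGpermIdx n σ) p) := rfl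

lemma VGperm_vgX (n : ℕ) (σ : Equiv.Perm (Fin (n+1))) (i j : Fin (n+1)) :
    VGperm n σ (vgX n i j) = vgX n (σ i) (σ j) := by
  by_cases h : i = j
  · subst h; simp [vgX_self]
  · have h' : σ i ≠ σ j := fun e => h (σ.injective e)
    rw [vgX, vgX, dif_pos h, dif_pos h', VGperm_mk, MvPolynomial.rename_X]
    rfl

lemma VGperm_mul (n : ℕ) (σ τ : Equiv.Perm (Fin (n+1))) (f : VG n) :
    VGperm n σ (VGperm n τ f) = VGperm n (σ * τ) f := by
  obtain ⟨p, rfl⟩ := Ideal.Quotient.mk_surjective f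
  rw [VGperm_mk, VGperm_mk, VGperm_mk, MvPolynomial.rename_rename]
  rfl

/-- Symmetrization. -/
def vgS (n : ℕ) : VG n →ₗ[ℚ] VG n :=
  ∑ σ : Equiv.Perm (Fin (n+1)), (VGperm n σ).toLinearMap

lemma vgS_apply (n : ℕ) (f : VG n) :
    vgS n f = ∑ σ : Equiv.Perm (Fin (n+1)), VGperm n σ f := by
  simp [vgS, LinearMap.sum_apply]

lemma vgS_perm (n : ℕ) (τ : Equiv.Perm (Fin (n+1))) (f : VG n) :
    vgS n (VGperm n τ f) = vgS n f := by
  simp only [vgS_apply, VGperm_mul]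
  exact Equiv.sum_comp (Equiv.mulRight τ) (fun σ => VGperm n σ f)

/-- Elements whose symmetrization is a scalar. -/
def vgN (n : ℕ) : Submodule ℚ (VG n) := (Submodule.span ℚ {(1 : VG n)}).comap (vgS n)

lemma mem_vgN_perm (n : ℕ) (τ : Equiv.Perm (Fin (n+1))) (f : VG n)
    (h : VGperm n τ f ∈ vgN n) : f ∈ vgN n := by
  rw [vgN, Submodule.mem_comap] at *
  rwa [vgS_perm] at h

lemma mem_vgN_of_zero (n : ℕ) (f : VG n) (h : vgS n f = 0) : f ∈ vgN n := by
  rw [vgN, Submodule.mem_comap, h]; exact Submodule.zero_mem _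

lemma one_mem_vgN (n : ℕ) : (1 : VG n) ∈ vgN n := by
  rw [vgN, Submodule.mem_comap, vgS_apply]
  refine Submodule.sum_mem _ fun σ _ => ?_
  rw [map_one]
  exact Submodule.mem_span_singleton_self _

/-- Subalgebra generated by the `x_{ij}` with `i, j < k`. -/
def vgA (n k : ℕ) : Subalgebra ℚ (VG n) :=
  Algebra.adjoin ℚ {f | ∃ i j : Fin (n+1), i.val < k ∧ j.val < k ∧ f = vgX n i j}

lemma vgX_mem_vgA (n k : ℕ) (i j : Fin (n+1)) (hi : i.val < k) (hj : j.val < k) :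
    vgX n i j ∈ vgA n k := Algebra.subset_adjoin ⟨i, j, hi, hj, rfl⟩

lemma vgA_perm (n k : ℕ) (σ : Equiv.Perm (Fin (n+1)))
    (hσ : ∀ i : Fin (n+1), i.val < k → (σ i).val < k) (f : VG n) (hf : f ∈ vgA n k) :
    VGperm n σ f ∈ vgA n k := by
  induction hf using Algebra.adjoin_induction with
  | mem x hx =>
    obtain ⟨i, j, hi, hj, rfl⟩ := hx
    rw [VGperm_vgX]
    exact vgX_mem_vgA n k _ _ (hσ i hi) (hσ j hj)
  | algebraMap r => rw [AlgHom.commutes]; exact Subalgebra.algebraMap_mem _ _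
  | add x y _ _ hx hy => rw [map_add]; exact Subalgebra.add_mem _ hx hy
  | mul x y _ _ hx hy => rw [map_mul]; exact Subalgebra.mul_mem _ hx hy

lemma vgA_fix (n k : ℕ) (σ : Equiv.Perm (Fin (n+1)))
    (hσ : ∀ i : Fin (n+1), i.val < k → σ i = i) (f : VG n) (hf : f ∈ vgA n k) :
    VGperm n σ f = f := by
  induction hf using Algebra.adjoin_induction with
  | mem x hx =>
    obtain ⟨i, j, hi, hj, rfl⟩ := hx
    rw [VGperm_vgX, hσ i hi, hσ j hj]
  | algebraMap r => rw [AlgHom.commutes]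
  | add x y _ _ hx hy => rw [map_add, hx, hy]
  | mul x y _ _ hx hy => rw [map_mul, hx, hy]

/-- Spanning set of `vgA n (k+1)` over `vgA n k`. -/
def vgG (n k : ℕ) (hk : k ≤ n) : Set (VG n) :=
  {f | f ∈ vgA n k} ∪
  {f | ∃ h ∈ vgA n k, ∃ i : Fin (n+1), i.val < k ∧ f = h * vgX n i ⟨k, Nat.lt_succ_of_le hk⟩}

lemma vgA_decomp (n k : ℕ) (hk : k ≤ n) (f : VG n) (hf : f ∈ vgA n (k+1)) :
    f ∈ Submodule.span ℚ (vgG n k hk) := by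
  set K : Fin (n+1) := ⟨k, Nat.lt_succ_of_le hk⟩ with hK
  have hmul : Submodule.span ℚ (vgG n k hk) * Submodule.span ℚ (vgG n k hk)
      ≤ Submodule.span ℚ (vgG n k hk) := by
    rw [Submodule.span_mul_span, Submodule.span_le]
    rintro _ ⟨a, ha, b, hb, rfl⟩
    rcases ha with ha | ⟨h, hh, i, hi, rfl⟩
    · rcases hb with hb | ⟨h', hh', j, hj, rfl⟩
      · exact Submodule.subset_span (Or.inl (Subalgebra.mul_mem (vgA n k) ha hb))
      · exact Submodule.subset_span
          (Or.inr ⟨a * h', Subalgebra.mul_mem _ ha hh', j, hj, (mul_assoc _ _ _).symm⟩)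
    · rcases hb with hb | ⟨h', hh', j, hj, rfl⟩
      · exact Submodule.subset_span
          (Or.inr ⟨h * b, Subalgebra.mul_mem _ hh hb, i, hi, by ring⟩)
      · have e : h * vgX n i K * (h' * vgX n j K) =
            (h * h' * vgX n i j) * vgX n j K - (h * h' * vgX n i j) * vgX n i K := by
          have h1 := vgX_arnold n i j K
          have h2 := vgX_anti n i K
          linear_combination (h * h') * (vgX n j K + vgX n i j) * h2 - h * h' * h1
        have hm : h * h' * vgX n i j ∈ vgA n k :=
          Subalgebra.mul_mem _ (Subalgebra.mul_mem _ hh hh') (vgX_mem_vgA n k i j hi hj)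
        show h * vgX n i K * (h' * vgX n j K) ∈ _
        rw [e]
        exact Submodule.sub_mem _ (Submodule.subset_span (Or.inr ⟨_, hm, j, hj, rfl⟩))
          (Submodule.subset_span (Or.inr ⟨_, hm, i, hi, rfl⟩))
  induction hf using Algebra.adjoin_induction with
  | mem x hx =>
    obtain ⟨i, j, hi, hj, rfl⟩ := hx
    by_cases hi' : i.val < k
    · by_cases hj' : j.val < k
      · exact Submodule.subset_span (Or.inl (vgX_mem_vgA n k i j hi' hj'))
      · have : j = K := Fin.ext (by simp [hK]; omega)
        rw [this]
        exact Submodule.subset_span (Or.inr ⟨1, Subalgebra.one_mem _, i, hi', by rw [one_mul]⟩)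
    · have hiK : i = K := Fin.ext (by simp [hK]; omega)
      by_cases hj' : j.val < k
      · have e : vgX n i j = - vgX n j K := by
          rw [hiK]; exact eq_neg_of_add_eq_zero_left (vgX_anti n K j)
        rw [e]
        exact Submodule.neg_mem _
          (Submodule.subset_span (Or.inr ⟨1, Subalgebra.one_mem _, j, hj', by rw [one_mul]⟩))
      · have : j = K := Fin.ext (by simp [hK]; omega)
        rw [hiK, this, vgX_self]; exact Submodule.zero_mem _
  | algebraMap r => exact Submodule.subset_span (Or.inl (Subalgebra.algebraMap_mem (vgA n k) r))
  | add x y _ _ hx hy => exact Submodule.add_mem _ hx hy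
  | mul x y _ _ hx hy => exact hmul (Submodule.mul_mem_mul hx hy)

/-- The generalized Arnold relation. -/
lemma vg_cycle (n : ℕ) (v : ℕ → Fin (n+1)) (L : ℕ) :
    (∏ i ∈ Finset.range (L+1), vgX n (v i) (v (i+1))) +
      vgX n (v (L+1)) (v 0) * ∑ j ∈ Finset.range (L+1), ∏ i ∈ Finset.range (L+1),
        (if i = j then 1 else vgX n (v i) (v (i+1))) = 0 := by
  induction L with
  | zero => simpa using vgX_anti n (v 0) (v 1)
  | succ L ih =>
    have e : ∑ j ∈ Finset.range (L+2), ∏ i ∈ Finset.range (L+2),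
        (if i = j then 1 else vgX n (v i) (v (i+1))) =
        (∑ j ∈ Finset.range (L+1), ∏ i ∈ Finset.range (L+1),
          (if i = j then 1 else vgX n (v i) (v (i+1)))) * vgX n (v (L+1)) (v (L+2)) +
        ∏ i ∈ Finset.range (L+1), vgX n (v i) (v (i+1)) := by
      rw [Finset.sum_range_succ, Finset.sum_mul]
      congr 1
      · refine Finset.sum_congr rfl fun j hj => ?_
        rw [Finset.prod_range_succ, if_neg]
        have := Finset.mem_range.1 hj
        omega
      · rw [Finset.prod_range_succ, if_pos rfl, mul_one]
        refine Finset.prod_congr rfl fun i hi => ?_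
        rw [if_neg]
        have := Finset.mem_range.1 hi
        omega
    rw [e, Finset.prod_range_succ]
    set P := ∏ i ∈ Finset.range (L+1), vgX n (v i) (v (i+1))
    set E := ∑ j ∈ Finset.range (L+1), ∏ i ∈ Finset.range (L+1),
          (if i = j then 1 else vgX n (v i) (v (i+1)))
    have h1 := vgX_arnold n (v 0) (v (L+1)) (v (L+2))
    have h2 := vgX_anti n (v 0) (v (L+1))
    linear_combination (vgX n (v (L+1)) (v (L+2)) + vgX n (v (L+2)) (v 0)) * ih + E * h1
      - E * (vgX n (v (L+1)) (v (L+2)) + vgX n (v (L+2)) (v 0)) * h2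

/-- Cyclic form of the generalized Arnold relation. -/
lemma vg_cycle' (n L : ℕ) (v : Fin (L+2) → Fin (n+1)) :
    ∑ j : Fin (L+2), ∏ i : Fin (L+2), (if i = j then 1 else vgX n (v i) (v (i+1))) = 0 := by
  have h := vg_cycle n (fun i => v (Fin.ofNat (L+2) i)) L
  have c1 : ∀ i : Fin (L+1), Fin.ofNat (L+2) (i : ℕ) = i.castSucc := by
    intro i; apply Fin.ext; exact Nat.mod_eq_of_lt (by omega)
  have c2 : ∀ i : Fin (L+1), Fin.ofNat (L+2) ((i : ℕ) + 1) = i.succ := by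
    intro i; apply Fin.ext; exact Nat.mod_eq_of_lt (by omega)
  have c3 : Fin.ofNat (L+2) (L+1) = Fin.last (L+1) := by
    apply Fin.ext; simp [Fin.ofNat]
  have c4 : Fin.ofNat (L+2) 0 = 0 := rfl
  simp only [Finset.prod_range, Finset.sum_range, c1, c2, c3, c4] at h
  rw [Fin.sum_univ_castSucc]
  simp only [Fin.prod_univ_castSucc (n := L+1), Fin.castSucc_inj, Fin.coeSucc_eq_succ,
    Fin.last_add_one, if_true, mul_one]
  have d1 : ∀ j : Fin (L+1), ¬ (Fin.last (L+1) = j.castSucc) :=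
    fun j => (Fin.castSucc_lt_last j).ne'
  have d2 : ∀ j : Fin (L+1), ¬ (j.castSucc = Fin.last (L+1)) :=
    fun j => (Fin.castSucc_lt_last j).ne
  simp only [d1, d2, if_false]
  rw [← Finset.sum_mul]
  simp only [Fin.ext_iff] at h ⊢
  linear_combination h

/-- The path monomial on vertices `k, …, k+L`. -/
def vgP (n k L : ℕ) : VG n :=
  ∏ i ∈ Finset.range L, vgX n (Fin.ofNat (n+1) (k+i)) (Fin.ofNat (n+1) (k+i+1))

lemma vgS_path (n k L : ℕ) (hkL : k + (L+1) ≤ n) (h : VG n) (hh : h ∈ vgA n k) :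
    vgS n (h * vgP n k (L+1)) = 0 := by
  let v : Fin (L+2) ↪ Fin (n+1) :=
    ⟨fun i => ⟨k + i, by omega⟩, fun a b hab => Fin.ext (by simpa using hab)⟩
  let τ : Equiv.Perm (Fin (n+1)) := (Equiv.addRight (1 : Fin (L+2))).viaEmbedding v
  have hτv : ∀ i, τ (v i) = v (i+1) := fun i =>
    Equiv.Perm.viaEmbedding_apply (Equiv.addRight (1 : Fin (L+2))) v i
  have hτ : ∀ i : Fin (n+1), i.val < k → τ i = i := by
    intro i hi
    apply Equiv.Perm.viaEmbedding_apply_of_notMem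
    rintro ⟨j, rfl⟩
    have : (v j).val = k + j := rfl
    omega
  let T : Fin (L+2) → VG n := fun j =>
    ∏ i : Fin (L+2), (if i = j then 1 else vgX n (v i) (v (i+1)))
  have hT : ∀ j, VGperm n τ (h * T j) = h * T (j+1) := by
    intro j
    rw [map_mul, vgA_fix n k τ hτ h hh, map_prod]
    congr 1
    refine (Finset.prod_congr rfl fun i _ => ?_).trans
      (Equiv.prod_comp (Equiv.addRight (1 : Fin (L+2)))
        (fun i => if i = j+1 then 1 else vgX n (v i) (v (i+1))))
    simp only [Equiv.coe_addRight, add_left_inj]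
    split_ifs
    · exact map_one _
    · rw [VGperm_vgX, hτv, hτv]
  have hS : ∀ j, vgS n (h * T j) = vgS n (h * T (Fin.last (L+1))) := by
    have step : ∀ j, vgS n (h * T (j+1)) = vgS n (h * T j) := by
      intro j; rw [← hT, vgS_perm]
    have h0 : ∀ j, vgS n (h * T j) = vgS n (h * T 0) := by
      intro j
      induction j using Fin.induction with
      | zero => rfl
      | succ i ih => rw [← ih, ← Fin.coeSucc_eq_succ, step]
    intro j
    rw [h0, h0 (Fin.last _)]
  have hsum : ∑ j, vgS n (h * T j) = 0 := by
    rw [← map_sum, ← Finset.mul_sum, vg_cycle' n L v, mul_zero, map_zero]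
  have hlast : T (Fin.last (L+1)) = vgP n k (L+1) := by
    simp only [T, vgP, Fin.prod_univ_castSucc (n := L+1), if_true, mul_one, Finset.prod_range]
    refine Finset.prod_congr rfl fun i _ => ?_
    rw [if_neg (Fin.castSucc_lt_last i).ne, Fin.coeSucc_eq_succ]
    congr 1
    · apply Fin.ext; exact (Nat.mod_eq_of_lt (by omega)).symm
    · apply Fin.ext
      exact (Nat.mod_eq_of_lt (show k + i.val + 1 < n + 1 by omega)).symm
  simp only [hS] at hsum
  rw [hlast, Finset.sum_const, Finset.card_univ, Fintype.card_fin] at hsum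
  rw [← Nat.cast_smul_eq_nsmul ℚ] at hsum
  exact (smul_eq_zero.1 hsum).resolve_left (by positivity)

lemma vgP_succ (n k L : ℕ) :
    vgP n k (L+1) = vgX n (Fin.ofNat (n+1) k) (Fin.ofNat (n+1) (k+1)) * vgP n (k+1) L := by
  rw [vgP, Finset.prod_range_succ', mul_comm, vgP]
  congr 1
  refine Finset.prod_congr rfl fun i _ => ?_
  rw [show k + (i+1) = k+1+i by ring]

lemma vgP_perm (n k L : ℕ) (hkL : k + L ≤ n) (σ : Equiv.Perm (Fin (n+1)))
    (hσ : ∀ i : Fin (n+1), k ≤ i.val → σ i = i) : VGperm n σ (vgP n k L) = vgP n k L := by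
  rw [vgP, map_prod]
  refine Finset.prod_congr rfl fun i hi => ?_
  have := Finset.mem_range.1 hi
  rw [VGperm_vgX, hσ, hσ]
  · simp [Fin.ofNat]; rw [Nat.mod_eq_of_lt] <;> omega
  · simp [Fin.ofNat]; rw [Nat.mod_eq_of_lt] <;> omega

lemma vgA_one (n : ℕ) (f : VG n) (hf : f ∈ vgA n 1) : f ∈ Submodule.span ℚ {(1 : VG n)} := by
  have : vgA n 1 ≤ ⊥ := by
    refine Algebra.adjoin_le ?_
    rintro _ ⟨i, j, hi, hj, rfl⟩
    have : i = j := Fin.ext (by omega)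
    rw [this, vgX_self]
    exact Subalgebra.zero_mem _
  obtain ⟨r, rfl⟩ := Algebra.mem_bot.1 (this hf)
  exact Submodule.mem_span_singleton.2 ⟨r, (Algebra.algebraMap_eq_smul_one r).symm⟩

lemma vgA_mono (n k : ℕ) (f : VG n) (hf : f ∈ vgA n k) : f ∈ vgA n (k+1) := by
  refine Algebra.adjoin_mono ?_ hf
  rintro _ ⟨i, j, hi, hj, rfl⟩
  exact ⟨i, j, by omega, by omega, rfl⟩

lemma vg_main (n k : ℕ) : ∀ L, k + L ≤ n → ∀ h ∈ vgA n (k+1), h * vgP n k L ∈ vgN n := by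
  induction k with
  | zero =>
    intro L hL h hh
    obtain ⟨r, rfl⟩ := Submodule.mem_span_singleton.1 (vgA_one n h hh)
    rw [smul_mul_assoc]
    refine Submodule.smul_mem _ _ ?_
    cases L with
    | zero => simpa [vgP] using one_mem_vgN n
    | succ L => exact mem_vgN_of_zero _ _ (vgS_path n 0 L hL 1 (Subalgebra.one_mem _))
  | succ k ih =>
    intro L hL h hh
    have hk : k + 1 ≤ n := by omega
    have hd := vgA_decomp n (k+1) hk h hh
    clear hh
    induction hd using Submodule.span_induction with
    | zero => rw [zero_mul]; exact Submodule.zero_mem _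
    | add x y _ _ hx hy => rw [add_mul]; exact Submodule.add_mem _ hx hy
    | smul r x _ hx => rw [smul_mul_assoc]; exact Submodule.smul_mem _ _ hx
    | mem x hx =>
      rcases hx with hx | ⟨g, hg, i, hi, rfl⟩
      · cases L with
        | zero =>
          have := ih 0 (by omega) x hx
          simpa [vgP] using this
        | succ L => exact mem_vgN_of_zero _ _ (vgS_path n (k+1) L hL x hx)
      · let K : Fin (n+1) := Fin.ofNat (n+1) k
        have hKv : K.val = k := by
          simp [K, Fin.ofNat]; omega
        have hK1 : (⟨k+1, Nat.lt_succ_of_le hk⟩ : Fin (n+1)) = Fin.ofNat (n+1) (k+1) := by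
          apply Fin.ext; simp [Fin.ofNat]; rw [Nat.mod_eq_of_lt]; omega
        have hfix : ∀ j : Fin (n+1), k + 1 ≤ j.val → Equiv.swap i K j = j := by
          intro j hj
          apply Equiv.swap_apply_of_ne_of_ne
          · rintro rfl; omega
          · rintro rfl; omega
        apply mem_vgN_perm n (Equiv.swap i K)
        rw [map_mul, map_mul, vgP_perm n (k+1) L hL _ hfix, VGperm_vgX, Equiv.swap_apply_left,
          hfix _ (le_refl (k+1)), hK1, mul_assoc, ← vgP_succ]
        refine ih (L+1) (by omega) _ (vgA_perm n (k+1) _ ?_ g hg)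
        intro j hj
        by_contra hc
        have h1 := hfix (Equiv.swap i K j) (by omega)
        rw [Equiv.swap_apply_self] at h1
        rw [← h1] at hc
        exact hc hj

lemma vgA_top (n : ℕ) (f : VG n) : f ∈ vgA n (n+1) := by
  obtain ⟨p, rfl⟩ := Ideal.Quotient.mk_surjective f
  induction p using MvPolynomial.induction_on with
  | C a => exact Subalgebra.algebraMap_mem (vgA n (n+1)) a
  | add p q hp hq => rw [map_add]; exact Subalgebra.add_mem _ hp hq
  | mul_X p v hp =>
    rw [map_mul]
    refine Subalgebra.mul_mem _ hp ?_
    have := vgX_mem_vgA n (n+1) v.1.1 v.1.2 v.1.1.isLt v.1.2.isLt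
    rwa [vgX, dif_pos v.2] at this

lemma vg_nontrivial (n : ℕ) : (1 : VG n) ≠ 0 := by
  intro h
  rw [← map_one (Ideal.Quotient.mk (VGrel n)), Ideal.Quotient.eq_zero_iff_mem] at h
  have hle : VGrel n ≤ RingHom.ker (MvPolynomial.constantCoeff (σ := VGidx n) (R := ℚ)) := by
    rw [VGrel, Ideal.span_le]
    rintro q ((⟨v, rfl⟩ | ⟨i, j, hij, rfl⟩) | ⟨i, j, k, hij, hjk, hki, rfl⟩) <;>
      simp [RingHom.mem_ker]
  have := hle h
  rw [RingHom.mem_ker, map_one] at this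
  exact one_ne_zero this

lemma vgInv_scalar (n : ℕ) (f : VG n) (hf : f ∈ VGinvFull n) :
    f ∈ Submodule.span ℚ {(1 : VG n)} := by
  have h1 := vg_main n n 0 le_rfl f (vgA_top n f)
  rw [vgP, Finset.prod_range_zero, mul_one, vgN, Submodule.mem_comap, vgS_apply,
    Finset.sum_congr rfl (fun σ _ => hf σ), Finset.sum_const, Finset.card_univ,
    ← Nat.cast_smul_eq_nsmul ℚ] at h1
  exact (Submodule.smul_mem_iff _ (Nat.cast_ne_zero.2 Fintype.card_ne_zero)).1 h1

/-- For every integer `n ≥ 2`, the `ℚ`-vector space `VG_n^{S_{n+1}}` has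
dimension `1`. -/
theorem finrank_VGinvFull (n : ℕ) (hn : 2 ≤ n) : Module.finrank ℚ (VGinvFull n) = 1 := by
  have h1 : (1 : VGinvFull n) ≠ 0 := fun h => vg_nontrivial n (congrArg Subtype.val h)
  refine finrank_eq_one (1 : VGinvFull n) h1 fun w => ?_
  obtain ⟨r, hr⟩ := Submodule.mem_span_singleton.1 (vgInv_scalar n w.1 w.2)
  exact ⟨r, Subtype.ext hr⟩

end
end

section
/- For every integer n ≥ 2, the ℚ-vector space OS_n^{S_{n+1}} of S_{n+1}-invariant elements of OS_n has dimension 2. -/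
noncomputable section

/-- Unordered pairs of distinct elements of `{1, …, n+1}` (as `Fin (n+1)`). -/
abbrev OSidx (n : ℕ) := {s : Sym2 (Fin (n+1)) // ¬ s.IsDiag}

/-- The exterior algebra over `ℚ` on generators indexed by unordered pairs of distinct
elements of `{1, …, n+1}`. -/
abbrev OSamb (n : ℕ) := ExteriorAlgebra ℚ (OSidx n →₀ ℚ)

/-- The generator `e_{ij} = e_{ji}` of the ambient exterior algebra. -/
def eAmb (n : ℕ) (i j : Fin (n+1)) (h : i ≠ j) : OSamb n :=
  ExteriorAlgebra.ι ℚ (Finsupp.single ⟨s(i,j), by simp [Sym2.mk_isDiag_iff, h]⟩ 1)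

/-- The Orlik–Solomon relations for the braid arrangement. -/
inductive OSRel (n : ℕ) : OSamb n → OSamb n → Prop
  | rel (i j k : Fin (n+1)) (hij : i ≠ j) (hjk : j ≠ k) (hik : i ≠ k) :
      OSRel n (eAmb n i k hik * eAmb n j k hjk - eAmb n i j hij * eAmb n j k hjk
        + eAmb n i j hij * eAmb n i k hik) 0

/-- The Orlik–Solomon algebra `OS_n` of the braid arrangement `A_n`. -/
abbrev OS (n : ℕ) := RingQuot (OSRel n)

/-- The generator `e_{ij}` of `OS_n`, defined to be `0` when `i = j`. -/
def eOS (n : ℕ) (i j : Fin (n+1)) : OS n :=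
  if h : i = j then 0 else RingQuot.mkAlgHom ℚ (OSRel n) (eAmb n i j h)

/-- `a = Σ_{1 ≤ i < j ≤ n} e_{ij}`. -/
def aOS (n : ℕ) : OS n :=
  ∑ p ∈ Finset.univ.filter (fun p : Fin n × Fin n => p.1 < p.2),
    eOS n p.1.castSucc p.2.castSucc

/-- `m = Σ_{1 ≤ i ≤ n} e_{i,n+1}`. -/
def mOS (n : ℕ) : OS n := ∑ i : Fin n, eOS n i.castSucc (Fin.last n)

/-- `c = Σ_{1 ≤ i < j ≤ n} (e_{ij} e_{i,n+1} + e_{ij} e_{j,n+1})`. -/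
def cOS (n : ℕ) : OS n :=
  ∑ p ∈ Finset.univ.filter (fun p : Fin n × Fin n => p.1 < p.2),
    (eOS n p.1.castSucc p.2.castSucc * eOS n p.1.castSucc (Fin.last n)
      + eOS n p.1.castSucc p.2.castSucc * eOS n p.2.castSucc (Fin.last n))

/-- `g = a·m − p·c` with `p = ⌊(n+1)/2⌋`. -/
def gOS (n : ℕ) : OS n := aOS n * mOS n - ((n+1)/2 : ℕ) • cOS n

/-- The action of a permutation on the index set of unordered pairs. -/
def OSpermIdx (n : ℕ) (σ : Equiv.Perm (Fin (n+1))) : OSidx n → OSidx n :=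
  fun s => ⟨Sym2.map σ s.1, by
    obtain ⟨⟨x, y⟩, hs⟩ := s
    intro hd
    rw [Sym2.map_pair_eq, Sym2.mk_isDiag_iff] at hd
    exact hs (Sym2.mk_isDiag_iff.mpr (σ.injective hd))⟩

/-- The algebra endomorphism of the ambient exterior algebra induced by a permutation. -/
def OSpermAmb (n : ℕ) (σ : Equiv.Perm (Fin (n+1))) : OSamb n →ₐ[ℚ] OSamb n :=
  ExteriorAlgebra.lift ℚ
    ⟨(ExteriorAlgebra.ι ℚ).comp (Finsupp.lmapDomain ℚ ℚ (OSpermIdx n σ)),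
      fun m => by simp [ExteriorAlgebra.ι_sq_zero]⟩

lemma OSpermAmb_e (n : ℕ) (σ : Equiv.Perm (Fin (n+1))) (i j : Fin (n+1)) (h : i ≠ j) :
    OSpermAmb n σ (eAmb n i j h) = eAmb n (σ i) (σ j) (fun hh => h (σ.injective hh)) := by
  simp only [OSpermAmb, eAmb, ExteriorAlgebra.lift_ι_apply, LinearMap.comp_apply,
    Finsupp.lmapDomain_apply, Finsupp.mapDomain_single]
  congr 1

/-- The algebra endomorphism of `OS_n` induced by a permutation of `{1, …, n+1}`. -/
def OSperm (n : ℕ) (σ : Equiv.Perm (Fin (n+1))) : OS n →ₐ[ℚ] OS n :=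
  RingQuot.liftAlgHom ℚ
    ⟨(RingQuot.mkAlgHom ℚ (OSRel n)).comp (OSpermAmb n σ), by
      intro x y h
      cases h with
      | rel i j k hij hjk hik =>
        simp only [AlgHom.comp_apply, map_sub, map_add, map_mul, map_zero, OSpermAmb_e]
        have := RingQuot.mkAlgHom_rel ℚ (OSRel.rel (σ i) (σ j) (σ k)
          (fun hh => hij (σ.injective hh)) (fun hh => hjk (σ.injective hh))
          (fun hh => hik (σ.injective hh)))
        simpa [map_sub, map_add, map_mul] using this⟩

/-- The subalgebra of `S_n`-invariants of `OS_n`, where `S_n` is the subgroup of permutations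
of `{1, …, n+1}` fixing `n+1`. -/
def OSinv (n : ℕ) : Subalgebra ℚ (OS n) where
  carrier := {x | ∀ σ : Equiv.Perm (Fin (n+1)), σ (Fin.last n) = Fin.last n → OSperm n σ x = x}
  mul_mem' := fun hx hy σ hσ => by rw [map_mul, hx σ hσ, hy σ hσ]
  add_mem' := fun hx hy σ hσ => by rw [map_add, hx σ hσ, hy σ hσ]
  one_mem' := fun σ _ => map_one _
  zero_mem' := fun σ _ => map_zero _
  algebraMap_mem' := fun r σ hσ => AlgHom.commutes _ r

/-- The subalgebra of `S_{n+1}`-invariants of `OS_n`. -/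
def OSinvFull (n : ℕ) : Subalgebra ℚ (OS n) where
  carrier := {x | ∀ σ : Equiv.Perm (Fin (n+1)), OSperm n σ x = x}
  mul_mem' := fun hx hy σ => by rw [map_mul, hx σ, hy σ]
  add_mem' := fun hx hy σ => by rw [map_add, hx σ, hy σ]
  one_mem' := fun σ => map_one _
  zero_mem' := fun σ => map_zero _
  algebraMap_mem' := fun r σ => AlgHom.commutes _ r

/-- The degree-`d` graded piece of `OS_n`: the image in `OS_n` of the degree-`d` component of
the exterior algebra. -/
def OSdeg (n : ℕ) (d : ℕ) : Submodule ℚ (OS n) :=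
  Submodule.map (RingQuot.mkAlgHom ℚ (OSRel n)).toLinearMap
    ((LinearMap.range (ExteriorAlgebra.ι ℚ : (OSidx n →₀ ℚ) →ₗ[ℚ] OSamb n)) ^ d)

/-- The degree-`d` graded piece of the invariant subalgebra `OS_n^{S_n}`. -/
def OSinvDeg (n : ℕ) (d : ℕ) : Submodule ℚ (OS n) :=
  Subalgebra.toSubmodule (OSinv n) ⊓ OSdeg n d

namespace OSProof

variable {n : ℕ}

lemma e_self (i : Fin (n+1)) : eOS n i i = 0 := by simp [eOS]

lemma eAmb_symm (i j : Fin (n+1)) (h : i ≠ j) : eAmb n i j h = eAmb n j i h.symm := by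
  unfold eAmb
  congr 3
  exact Sym2.eq_swap

lemma e_symm (i j : Fin (n+1)) : eOS n i j = eOS n j i := by
  by_cases h : i = j
  · subst h; rfl
  · simp only [eOS, h, Ne.symm h, dite_false]
    rw [eAmb_symm]

/-- Every `e_{ij}` is the image of a degree-one element. -/
lemma e_eq_ι (i j : Fin (n+1)) :
    ∃ v, eOS n i j = RingQuot.mkAlgHom ℚ (OSRel n) (ExteriorAlgebra.ι ℚ v) := by
  by_cases h : i = j
  · exact ⟨0, by simp [eOS, h]⟩
  · exact ⟨_, by simp only [eOS, h, dite_false]; rfl⟩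

lemma e_anti (i j k l : Fin (n+1)) :
    eOS n i j * eOS n k l = - (eOS n k l * eOS n i j) := by
  obtain ⟨v, hv⟩ := e_eq_ι i j
  obtain ⟨w, hw⟩ := e_eq_ι k l
  have h := congrArg (RingQuot.mkAlgHom ℚ (OSRel n))
    (eq_neg_of_add_eq_zero_left (ExteriorAlgebra.ι_add_mul_swap v w))
  rw [map_neg, map_mul, map_mul] at h
  rw [hv, hw, h]

lemma e_sq (i j : Fin (n+1)) : eOS n i j * eOS n i j = 0 := by
  obtain ⟨v, hv⟩ := e_eq_ι i j
  rw [hv, ← map_mul, ExteriorAlgebra.ι_sq_zero, map_zero]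

lemma e_rel (i j k : Fin (n+1)) :
    eOS n i k * eOS n j k - eOS n i j * eOS n j k + eOS n i j * eOS n i k = 0 := by
  by_cases hij : i = j
  · subst hij; simp [e_self, e_sq]
  by_cases hjk : j = k
  · subst hjk; simp [e_self, e_sq]
  by_cases hik : i = k
  · subst hik; rw [e_symm j i]; simp [e_self, e_sq]
  have := RingQuot.mkAlgHom_rel ℚ (OSRel.rel i j k hij hjk hik)
  simpa [eOS, hij, hjk, hik] using this

lemma perm_e (σ : Equiv.Perm (Fin (n+1))) (i j : Fin (n+1)) :
    OSperm n σ (eOS n i j) = eOS n (σ i) (σ j) := by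
  by_cases h : i = j
  · subst h; simp [e_self]
  · simp only [eOS, h, dite_false, σ.injective.eq_iff, OSperm, RingQuot.liftAlgHom_mkAlgHom_apply,
      AlgHom.comp_apply, OSpermAmb_e]

/-- Path monomials. -/
def path (n : ℕ) : List (Fin (n+1)) → OS n
  | [] => 1
  | [_] => 1
  | a :: b :: l => eOS n a b * path n (b :: l)

lemma path_cons (a b : Fin (n+1)) (l) : path n (a :: b :: l) = eOS n a b * path n (b :: l) := rfl

lemma perm_path (σ : Equiv.Perm (Fin (n+1))) (l : List (Fin (n+1))) :
    OSperm n σ (path n l) = path n (l.map σ) := by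
  induction l with
  | nil => simp [path]
  | cons a l ih =>
    cases l with
    | nil => simp [path]
    | cons b l => rw [path_cons, map_mul, perm_e, ih]; rfl

lemma path_append (l t : List (Fin (n+1))) (c : Fin (n+1)) :
    path n (l ++ c :: t) = path n (l ++ [c]) * path n (c :: t) := by
  induction l with
  | nil => simp [path]
  | cons a l ih =>
    cases l with
    | nil => simp [path]
    | cons b l =>
      simp only [List.cons_append, path_cons, mul_assoc] at ih ⊢
      rw [ih]

lemma e_path (a b : Fin (n+1)) (l : List (Fin (n+1))) :
    ∃ c : ℚ, eOS n a b * path n l = c • (path n l * eOS n a b) := by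
  induction l with
  | nil => exact ⟨1, by simp [path]⟩
  | cons x l ih =>
    cases l with
    | nil => exact ⟨1, by simp [path]⟩
    | cons y l =>
      obtain ⟨c, hc⟩ := ih
      refine ⟨-c, ?_⟩
      rw [path_cons, ← mul_assoc, e_anti, neg_mul, mul_assoc, hc]
      simp [mul_assoc]

lemma ee_path (a b c d : Fin (n+1)) (l : List (Fin (n+1))) :
    (eOS n a b * eOS n c d) * path n l = path n l * (eOS n a b * eOS n c d) := by
  induction l with
  | nil => simp [path]
  | cons x l ih =>
    cases l with
    | nil => simp [path]
    | cons y l =>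
      have h : (eOS n a b * eOS n c d) * eOS n x y = eOS n x y * (eOS n a b * eOS n c d) := by
        rw [mul_assoc, e_anti c d x y, mul_neg, ← mul_assoc, e_anti a b x y]
        simp [mul_assoc]
      rw [path_cons, ← mul_assoc, h, mul_assoc, ih, mul_assoc]

/-- Attaching a leaf `w` to the `j`-th vertex of a path. -/
lemma attach (w : Fin (n+1)) (x : List (Fin (n+1))) : ∀ (j : ℕ) (hj : j < x.length),
    eOS n w x[j] * path n x =
      ∑ i ∈ Finset.range (j+1), (-1 : ℚ)^i • path n (x.insertIdx i w) := by
  induction x with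
  | nil => intro j hj; simp at hj
  | cons a x ih =>
    intro j hj
    cases j with
    | zero => simp [path_cons]
    | succ j =>
      cases x with
      | nil => simp at hj
      | cons b t =>
        have hj' : j < (b :: t).length := by simpa using hj
        have h1 := ih j hj'
        have hstep : ∀ i, eOS n a b * path n ((b :: t).insertIdx (i+1) w)
            = path n ((a :: b :: t).insertIdx (i+2) w) := by
          intro i; simp [path_cons]
        have hL : eOS n w (a :: b :: t)[j+1] * path n (a :: b :: t)
            = - (eOS n a b * (eOS n w (b :: t)[j] * path n (b :: t))) := by
          rw [path_cons, ← mul_assoc, e_anti]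
          simp [mul_assoc]
        rw [hL, h1, Finset.sum_range_succ', Finset.sum_range_succ' _ (j+1),
          Finset.sum_range_succ' _ j]
        rw [mul_add, Finset.mul_sum]
        simp only [mul_smul_comm, hstep]
        have hr := e_rel w a b
        have h0 : -(eOS n a b * path n ((b :: t).insertIdx 0 w))
            = path n ((a :: b :: t).insertIdx 0 w) - path n ((a :: b :: t).insertIdx 1 w) := by
          simp only [List.insertIdx_zero, List.insertIdx_succ_cons, path_cons, ← mul_assoc,
            ← sub_mul]
          rw [← neg_mul]
          congr 1
          rw [e_anti a b w b, neg_neg, e_symm a w, ← sub_eq_zero, ← hr]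
          abel
        have h2 : ∀ i, (-1 : ℚ)^(i+1+1) = - (-1 : ℚ)^(i+1) := by intro i; ring
        simp only [h2, neg_smul, Finset.sum_neg_distrib, pow_zero, one_smul, zero_add, pow_one,
          neg_add]
        rw [h0]
        abel

/-- The subalgebra generated by `e_{ij}` with `i, j ∈ S`. -/
def A (n : ℕ) (S : Finset (Fin (n+1))) : Subalgebra ℚ (OS n) :=
  Algebra.adjoin ℚ {x | ∃ i ∈ S, ∃ j ∈ S, x = eOS n i j}

lemma e_mem_A {S : Finset (Fin (n+1))} {i j} (hi : i ∈ S) (hj : j ∈ S) : eOS n i j ∈ A n S :=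
  Algebra.subset_adjoin ⟨i, hi, j, hj, rfl⟩

lemma A_mono {S T : Finset (Fin (n+1))} (h : S ⊆ T) : A n S ≤ A n T := by
  apply Algebra.adjoin_mono
  rintro x ⟨i, hi, j, hj, rfl⟩
  exact ⟨i, h hi, j, h hj, rfl⟩

lemma A_empty : A n ∅ = ⊥ := by simp [A]

lemma perm_A {S : Finset (Fin (n+1))} (σ : Equiv.Perm (Fin (n+1))) (hσ : ∀ i ∈ S, σ i = i)
    {y : OS n} (hy : y ∈ A n S) : OSperm n σ y = y := by
  induction hy using Algebra.adjoin_induction with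
  | mem x hx =>
    obtain ⟨i, hi, j, hj, rfl⟩ := hx
    rw [perm_e, hσ i hi, hσ j hj]
  | algebraMap r => simp
  | add x y _ _ hx hy => rw [map_add, hx, hy]
  | mul x y _ _ hx hy => rw [map_mul, hx, hy]

lemma A_insert (w : Fin (n+1)) (S : Finset (Fin (n+1))) (x : OS n) (hx : x ∈ A n (insert w S)) :
    x ∈ Submodule.span ℚ ({y | y ∈ A n S} ∪ {z | ∃ i ∈ S, ∃ y ∈ A n S, z = eOS n i w * y}) := by
  set B := Submodule.span ℚ ({y | y ∈ A n S} ∪ {z | ∃ i ∈ S, ∃ y ∈ A n S, z = eOS n i w * y})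
    with hB
  have hA : ∀ y ∈ A n S, y ∈ B := fun y hy => Submodule.subset_span (Or.inl hy)
  have hE : ∀ i ∈ S, ∀ y ∈ A n S, eOS n i w * y ∈ B := fun i hi y hy =>
    Submodule.subset_span (Or.inr ⟨i, hi, y, hy, rfl⟩)
  have red : ∀ g : OS n, (∀ y ∈ A n S, g * y ∈ B) →
      (∀ i ∈ S, ∀ y ∈ A n S, g * (eOS n i w * y) ∈ B) → ∀ b ∈ B, g * b ∈ B := by
    intro g h1 h2 b hb
    induction hb using Submodule.span_induction with
    | mem b hb =>
      rcases hb with hb | ⟨i, hi, y, hy, rfl⟩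
      · exact h1 b hb
      · exact h2 i hi y hy
    | zero => simp
    | add b c _ _ hb hc => rw [mul_add]; exact B.add_mem hb hc
    | smul r b _ hb => rw [mul_smul_comm]; exact B.smul_mem r hb
  have hw : ∀ i ∈ S, ∀ b ∈ B, eOS n i w * b ∈ B := by
    intro i hi
    apply red _ (hE i hi)
    intro j hj y hy
    have h : eOS n i w * (eOS n j w * y)
        = - (eOS n j w * (eOS n i j * y)) + eOS n i w * (eOS n i j * y) := by
      have hr := e_rel i j w
      have h1 := e_anti i j j w
      have h2 := e_anti i j i w
      rw [h1, h2] at hr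
      simp only [← mul_assoc, ← neg_mul, ← add_mul]
      congr 1
      rw [← sub_eq_zero, ← hr, add_mul, neg_mul]
      abel
    rw [h]
    exact B.add_mem (B.neg_mem (hE j hj _ (mul_mem (e_mem_A hi hj) hy)))
      (hE i hi _ (mul_mem (e_mem_A hi hj) hy))
  have hg : ∀ g ∈ {x | ∃ i ∈ insert w S, ∃ j ∈ insert w S, x = eOS n i j}, ∀ b ∈ B,
      g * b ∈ B := by
    rintro g ⟨i, hi, j, hj, rfl⟩
    rw [Finset.mem_insert] at hi hj
    rcases hi with rfl | hi <;> rcases hj with rfl | hj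
    · intro b _; simp [e_self]
    · rw [e_symm]; exact hw j hj
    · exact hw i hi
    · apply red
      · intro y hy; exact hA _ (mul_mem (e_mem_A hi hj) hy)
      · intro k hk y hy
        rw [← mul_assoc, e_anti, neg_mul, mul_assoc]
        exact B.neg_mem (hE k hk _ (mul_mem (e_mem_A hi hj) hy))
  have hx' : x ∈ Subalgebra.toSubmodule (A n (insert w S)) := hx
  rw [A, Algebra.adjoin_eq_span] at hx'
  refine Submodule.span_le.2 ?_ hx'
  intro z hz
  induction hz using Submonoid.closure_induction_left with
  | one => exact hA _ (one_mem _)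
  | mul_left g hg' b _ hb => exact hg g hg' b hb

/-- The spanning set by path monomials times elements supported off the path. -/
lemma A_span (S : Finset (Fin (n+1))) : S.Nonempty → ∀ x ∈ A n S,
    x ∈ Submodule.span ℚ {z | ∃ l : List (Fin (n+1)), l ≠ [] ∧ l.Nodup ∧ (∀ i ∈ l, i ∈ S) ∧
      ∃ y ∈ A n (S \ l.toFinset), z = path n l * y} := by
  induction S using Finset.induction_on with
  | empty => simp
  | insert w S hwS ih =>
    intro _ x hx
    set N := Submodule.span ℚ {z | ∃ l : List (Fin (n+1)), l ≠ [] ∧ l.Nodup ∧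
      (∀ i ∈ l, i ∈ insert w S) ∧
      ∃ y ∈ A n ((insert w S) \ l.toFinset), z = path n l * y} with hN
    have hgen : ∀ l : List (Fin (n+1)), l ≠ [] → l.Nodup → (∀ i ∈ l, i ∈ insert w S) →
      ∀ y ∈ A n ((insert w S) \ l.toFinset), path n l * y ∈ N :=
      fun l h1 h2 h3 y hy => Submodule.subset_span ⟨l, h1, h2, h3, y, hy, rfl⟩
    have hAS : ∀ y ∈ A n S, y ∈ N := by
      intro y hy
      have := hgen [w] (by simp) (by simp) (by simp) y (A_mono (by
        intro i hi; simp; exact ⟨Or.inr hi, fun h => hwS (h ▸ hi)⟩) hy)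
      simpa [path] using this
    refine Submodule.span_le.2 ?_ (A_insert w S x hx)
    rintro z (hz | ⟨i, hi, y, hy, rfl⟩)
    · exact hAS z hz
    · have hy' := ih ⟨i, hi⟩ y hy
      clear hy hx
      show eOS n i w * y ∈ N
      induction hy' using Submodule.span_induction with
      | zero => simp
      | add b c _ _ hb hc => rw [mul_add]; exact N.add_mem hb hc
      | smul r b _ hb => rw [mul_smul_comm]; exact N.smul_mem r hb
      | mem b hb =>
        obtain ⟨l, hl, hnd, hlS, y, hy, rfl⟩ := hb
        have hwl : w ∉ l := fun h => hwS (hlS w h)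
        by_cases hil : i ∈ l
        · obtain ⟨j, hj, rfl⟩ := List.getElem_of_mem hil
          rw [e_symm, ← mul_assoc, attach, Finset.sum_mul]
          refine N.sum_mem fun k hk => ?_
          rw [smul_mul_assoc]
          refine N.smul_mem _ ?_
          have hk' : k ≤ l.length := by
            have := Finset.mem_range.1 hk; omega
          have hp : (l.insertIdx k w).Perm (w :: l) := List.perm_insertIdx w l hk'
          refine hgen _ ?_ ?_ ?_ y ?_
          · intro h; rw [h] at hp; simpa using hp.length_eq
          · rw [hp.nodup_iff]; simp [hwl, hnd]
          · intro i hi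
            rw [hp.mem_iff] at hi
            rcases List.mem_cons.1 hi with rfl | hi
            · simp
            · simp [hlS i hi]
          · refine A_mono ?_ hy
            intro i hi
            simp only [Finset.mem_sdiff, List.mem_toFinset, Finset.mem_insert, hp.mem_iff,
              List.mem_cons] at hi ⊢
            refine ⟨Or.inr hi.1, ?_⟩
            rintro (rfl | h)
            · exact hwS hi.1
            · exact hi.2 h
        · obtain ⟨c, hc⟩ := e_path i w l
          rw [← mul_assoc, hc, smul_mul_assoc, mul_assoc]
          refine N.smul_mem _ (hgen l hl hnd (fun i hi => by simp [hlS i hi]) _ ?_)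
          refine mul_mem (e_mem_A ?_ ?_) (A_mono ?_ hy)
          · simp [hi, hil]
          · simp [hwl]
          · exact Finset.sdiff_subset_sdiff (Finset.subset_insert _ _) subset_rfl

lemma exists_perm {α : Type*} [DecidableEq α] {l l' : List α} (h : l.Perm l') : l.Nodup →
    ∃ σ : Equiv.Perm α, l.map σ = l' ∧ ∀ x, x ∉ l → σ x = x := by
  induction h with
  | nil => intro _; exact ⟨1, by simp⟩
  | cons a h ih =>
    intro hnd
    rw [List.nodup_cons] at hnd
    obtain ⟨σ, h1, h2⟩ := ih hnd.2
    exact ⟨σ, by simp [h1, h2 a hnd.1], fun x hx => h2 x (fun h => hx (by simp [h]))⟩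
  | swap a b l =>
    intro hnd
    simp only [List.nodup_cons, List.mem_cons, not_or] at hnd
    refine ⟨Equiv.swap a b, ?_, ?_⟩
    · simp only [List.map_cons, Equiv.swap_apply_right, Equiv.swap_apply_left]
      congr 2
      conv_rhs => rw [← List.map_id l]
      apply List.map_congr_left
      intro x hx
      apply Equiv.swap_apply_of_ne_of_ne
      · rintro rfl; exact hnd.2.1 hx
      · rintro rfl; exact hnd.1.2 hx
    · intro x hx
      simp only [List.mem_cons, not_or] at hx
      exact Equiv.swap_apply_of_ne_of_ne hx.2.1 hx.1
  | trans h1 h2 ih1 ih2 =>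
    intro hnd
    obtain ⟨σ, a1, a2⟩ := ih1 hnd
    obtain ⟨τ, b1, b2⟩ := ih2 (h1.nodup_iff.1 hnd)
    refine ⟨τ * σ, ?_, ?_⟩
    · rw [← b1, ← a1]; simp
    · intro x hx
      simp [a2 x hx, b2 x (fun h => hx (h1.mem_iff.2 h))]

section functional

lemma f_perm {M : Type*} [AddCommGroup M] [Module ℚ M] (f : OS n →ₗ[ℚ] M)
    (hf : ∀ σ x, f (OSperm n σ x) = f x)
    {l l' : List (Fin (n+1))} (h : l.Perm l') (hnd : l.Nodup) {S : Finset (Fin (n+1))}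
    (hS : ∀ i ∈ l, i ∉ S) {y : OS n} (hy : y ∈ A n S) :
    f (path n l' * y) = f (path n l * y) := by
  obtain ⟨σ, h1, h2⟩ := exists_perm h hnd
  rw [← hf σ (path n l * y), map_mul (OSperm n σ), perm_path, h1,
    perm_A σ (fun i hi => h2 i (fun hl => hS i hl hi)) hy]

lemma f_long {M : Type*} [AddCommGroup M] [Module ℚ M] (f : OS n →ₗ[ℚ] M)
    (hf : ∀ σ x, f (OSperm n σ x) = f x)
    {l : List (Fin (n+1))} (hl : 3 ≤ l.length) (hnd : l.Nodup) {S : Finset (Fin (n+1))}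
    (hS : ∀ i ∈ l, i ∉ S) {y : OS n} (hy : y ∈ A n S) :
    f (path n l * y) = 0 := by
  match l, hl with
  | u :: w :: a :: t, _ =>
  obtain ⟨x, c, hxc⟩ : ∃ x c, a :: t = x ++ [c] := by
    rcases List.eq_nil_or_concat (a :: t) with h | ⟨x, c, h⟩
    · simp at h
    · exact ⟨x, c, by simpa using h⟩
  rw [hxc] at hnd hS ⊢
  set p := f (path n (u :: w :: (x ++ [c])) * y) with hp
  have hperm : ∀ l', (u :: w :: (x ++ [c])).Perm l' → f (path n l' * y) = p :=
    fun l' h => f_perm f hf h hnd hS hy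
  have hlen : x.length < (x ++ [c]).length := by simp
  have e1 : eOS n u w * (eOS n w c * path n (x ++ [c])) = - path n (x ++ [c, w, u]) := by
    rw [← mul_assoc, ee_path, show x ++ [c, w, u] = x ++ c :: [w, u] from rfl, path_append x [w, u],
      path_cons, path_cons, e_anti u w w c, e_symm w c, e_symm u w]
    simp [path]
  have e2 := attach w (x ++ [c]) x.length hlen
  have hc : (x ++ [c])[x.length] = c := by simp
  rw [hc] at e2
  rw [e2] at e1
  have e3 : ∀ i ∈ Finset.range (x.length + 1),
      f (eOS n u w * path n ((x ++ [c]).insertIdx i w) * y)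
        = (∑ k ∈ Finset.range (i+1), (-1 : ℚ)^k) • p := by
    intro i hi
    have hi' : i ≤ (x ++ [c]).length := by
      have := Finset.mem_range.1 hi
      simp; omega
    have hlt : i < ((x ++ [c]).insertIdx i w).length := by
      rw [List.length_insertIdx_of_le_length hi']; omega
    have h1 := attach u ((x ++ [c]).insertIdx i w) i hlt
    rw [List.getElem_insertIdx_self] at h1
    rw [h1, Finset.sum_mul, map_sum, Finset.sum_smul]
    refine Finset.sum_congr rfl fun k hk => ?_
    rw [smul_mul_assoc, map_smul, hperm]
    have hk' : k ≤ ((x ++ [c]).insertIdx i w).length := by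
      have := Finset.mem_range.1 hk; omega
    exact ((List.perm_insertIdx u _ hk').trans
      ((List.perm_insertIdx w _ hi').cons u)).symm
  have e4 := congrArg (fun z => f (z * y)) e1
  simp only [Finset.mul_sum, Finset.sum_mul, map_sum, mul_smul_comm, smul_mul_assoc, map_smul,
    neg_mul, map_neg] at e4
  rw [Finset.sum_congr rfl (fun i hi => by rw [e3 i hi, smul_smul]), ← Finset.sum_smul,
    hperm (x ++ [c, w, u])] at e4
  · set q := ∑ i ∈ Finset.range (x.length + 1), (-1 : ℚ)^i * ∑ k ∈ Finset.range (i+1), (-1 : ℚ)^k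
    have hq : 0 ≤ q := by
      refine Finset.sum_nonneg fun i _ => ?_
      have : ∀ i : ℕ, ∑ k ∈ Finset.range (i+1), (-1 : ℚ)^k = (1 + (-1 : ℚ)^i)/2 := by
        intro i
        induction i with
        | zero => simp
        | succ i ih => rw [Finset.sum_range_succ, ih]; ring
      rw [this]
      rcases neg_one_pow_eq_or ℚ i with h | h <;> rw [h] <;> norm_num
    have h5 : (q + 1) • p = 0 := by rw [add_smul, e4]; simp
    rcases smul_eq_zero.1 h5 with h | h
    · exfalso; linarith
    · exact h
  · have h1 : (u :: w :: (x ++ [c])) = [u, w] ++ (x ++ [c]) := rfl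
    have h2 : x ++ [c, w, u] = (x ++ [c]) ++ [w, u] := by simp
    rw [h1, h2]
    exact List.perm_append_comm.trans ((List.Perm.swap w u []).append_left _)

lemma f_edge {M : Type*} [AddCommGroup M] [Module ℚ M] (f : OS n →ₗ[ℚ] M)
    (hf : ∀ σ x, f (OSperm n σ x) = f x)
    (S : Finset (Fin (n+1))) : ∀ (a b : Fin (n+1)), a ≠ b → a ∉ S → b ∉ S →
    ∀ y ∈ A n S, f (eOS n a b * y) ∈ Submodule.span ℚ {f (eOS n a b)} := by
  induction S using Finset.strongInduction with
  | H S ih =>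
  intro a b hab ha hb y hy
  rcases S.eq_empty_or_nonempty with rfl | hne
  · rw [A_empty, Algebra.mem_bot] at hy
    obtain ⟨r, rfl⟩ := hy
    rw [Algebra.algebraMap_eq_smul_one, mul_smul_comm, mul_one, map_smul]
    exact Submodule.smul_mem _ _ (Submodule.mem_span_singleton_self _)
  · have hy' := A_span S hne y hy
    clear hy
    induction hy' using Submodule.span_induction with
    | zero => simp
    | add b c _ _ hb hc => rw [mul_add, map_add]; exact Submodule.add_mem _ hb hc
    | smul r b _ hb => rw [mul_smul_comm, map_smul]; exact Submodule.smul_mem _ r hb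
    | mem z hz =>
      obtain ⟨l, hl, hnd, hlS, y, hy, rfl⟩ := hz
      match l, hl with
      | [v], _ =>
        have : path n [v] = 1 := rfl
        rw [this, one_mul]
        refine ih _ ?_ a b hab (by simp [ha]) (by simp [hb]) y hy
        exact Finset.sdiff_ssubset (by simpa using hlS) (by simp)
      | [v, c], _ =>
        have hpath : path n [v, c] = eOS n v c := by simp [path]
        have hv := hlS v (by simp)
        have hc := hlS c (by simp)
        have hvc : v ≠ c := by simpa using hnd
        have hva : a ≠ v := fun h => ha (h ▸ hv)
        have hca : a ≠ c := fun h => ha (h ▸ hc)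
        have hvb : b ≠ v := fun h => hb (h ▸ hv)
        have hcb : b ≠ c := fun h => hb (h ▸ hc)
        have hpm : [a, b, v, c].Perm [v, c, a, b] :=
          List.perm_append_comm (l₁ := [a, b]) (l₂ := [v, c])
        obtain ⟨σ, h1, h2⟩ := exists_perm hpm (by simp [*])
        simp only [List.map_cons, List.map_nil, List.cons.injEq, and_true] at h1
        obtain ⟨s1, s2, s3, s4⟩ := h1
        have hfix : OSperm n σ y = y := by
          refine perm_A σ (fun i hi => h2 i ?_) hy
          simp only [Finset.mem_sdiff, List.mem_toFinset, List.mem_cons, List.not_mem_nil,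
            or_false, not_or] at hi ⊢
          exact ⟨fun h => ha (h ▸ hi.1), fun h => hb (h ▸ hi.1), hi.2.1, hi.2.2⟩
        have h3 := hf σ (eOS n a b * (eOS n v c * y))
        rw [map_mul (OSperm n σ), map_mul (OSperm n σ), perm_e, perm_e, s1, s2, s3, s4, hfix, ← mul_assoc, e_anti,
          neg_mul, mul_assoc, map_neg] at h3
        have h4 : f (eOS n a b * (eOS n v c * y)) = 0 := by
          have h5 : (2 : ℚ) • f (eOS n a b * (eOS n v c * y)) = 0 := by
            rw [two_smul]
            nth_rewrite 1 [← h3]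
            exact neg_add_cancel _
          exact (smul_eq_zero.1 h5).resolve_left two_ne_zero
        rw [hpath, h4]
        exact Submodule.zero_mem _
      | u :: w :: c :: t, _ =>
        obtain ⟨r, hr⟩ := e_path a b (u :: w :: c :: t)
        rw [← mul_assoc, hr, smul_mul_assoc, mul_assoc, map_smul,
          f_long f hf (S := insert a (insert b (S \ (u :: w :: c :: t).toFinset)))
            (by simp) hnd]
        · simp
        · intro i hi
          simp only [Finset.mem_insert, not_or, Finset.mem_sdiff, not_and, not_not,
            List.mem_toFinset]
          exact ⟨fun h => ha (h ▸ hlS i hi), fun h => hb (h ▸ hlS i hi), fun _ => hi⟩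
        · refine mul_mem (e_mem_A (by simp) (by simp)) (A_mono ?_ hy)
          exact (Finset.subset_insert _ _).trans (Finset.subset_insert _ _)

lemma f_e {M : Type*} [AddCommGroup M] [Module ℚ M] (f : OS n →ₗ[ℚ] M)
    (hf : ∀ σ x, f (OSperm n σ x) = f x)
    (hn : 2 ≤ n) (a b : Fin (n+1)) (hab : a ≠ b) :
    f (eOS n a b) = f (eOS n 0 (Fin.last n)) := by
  have h0 : (0 : Fin (n+1)) ≠ Fin.last n := by
    intro h; have := congrArg Fin.val h; simp at this; omega
  have h1 : (0 : Fin (n+1)) ≠ Equiv.swap a 0 b := by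
    intro h
    apply hab
    apply (Equiv.swap a 0).injective
    rw [← h]; simp
  rw [← hf (Equiv.swap (Equiv.swap a 0 b) (Fin.last n) * Equiv.swap a 0), perm_e]
  simp [Equiv.swap_apply_of_ne_of_ne h1 h0]

lemma f_all {M : Type*} [AddCommGroup M] [Module ℚ M] (f : OS n →ₗ[ℚ] M)
    (hf : ∀ σ x, f (OSperm n σ x) = f x)
    (hn : 2 ≤ n) (S : Finset (Fin (n+1))) : ∀ y ∈ A n S,
    f y ∈ Submodule.span ℚ {f 1, f (eOS n 0 (Fin.last n))} := by
  induction S using Finset.strongInduction with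
  | H S ih =>
  intro y hy
  rcases S.eq_empty_or_nonempty with rfl | hne
  · rw [A_empty, Algebra.mem_bot] at hy
    obtain ⟨r, rfl⟩ := hy
    rw [Algebra.algebraMap_eq_smul_one, map_smul]
    exact Submodule.smul_mem _ _ (Submodule.subset_span (by simp))
  · have hy' := A_span S hne y hy
    clear hy
    induction hy' using Submodule.span_induction with
    | zero => simp
    | add b c _ _ hb hc => rw [map_add]; exact Submodule.add_mem _ hb hc
    | smul r b _ hb => rw [map_smul]; exact Submodule.smul_mem _ r hb
    | mem z hz =>
      obtain ⟨l, hl, hnd, hlS, y, hy, rfl⟩ := hz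
      match l, hl with
      | [v], _ =>
        have : path n [v] = 1 := rfl
        rw [this, one_mul]
        refine ih _ ?_ y hy
        exact Finset.sdiff_ssubset (by simpa using hlS) (by simp)
      | [v, c], _ =>
        have hpath : path n [v, c] = eOS n v c := by simp [path]
        have hvc : v ≠ c := by simpa using hnd
        have := f_edge f hf _ v c hvc (by simp) (by simp) y hy
        rw [f_e f hf hn v c hvc] at this
        rw [hpath]
        exact Submodule.span_mono (by simp) this
      | u :: w :: c :: t, _ =>
        rw [f_long f hf (by simp) hnd _ hy]
        · simp
        · intro i hi
          simp only [Finset.mem_sdiff, not_and, not_not, List.mem_toFinset]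
          exact fun _ => hi

end functional

lemma A_univ (x : OS n) : x ∈ A n Finset.univ := by
  obtain ⟨x, rfl⟩ := RingQuot.mkAlgHom_surjective ℚ (OSRel n) x
  induction x using ExteriorAlgebra.induction with
  | algebraMap r => simp
  | add a b ha hb => rw [map_add]; exact add_mem ha hb
  | mul a b ha hb => rw [map_mul]; exact mul_mem ha hb
  | ι v =>
    induction v using Finsupp.induction_linear with
    | zero => simp
    | add a b ha hb => rw [map_add, map_add]; exact add_mem ha hb
    | single s r =>
      obtain ⟨⟨i, j⟩, hs⟩ := s
      have hij : i ≠ j := fun h => hs (Sym2.mk_isDiag_iff.mpr h)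
      have h1 : (Finsupp.single (⟨s(i, j), hs⟩ : OSidx n) r)
          = r • Finsupp.single (⟨s(i, j), hs⟩ : OSidx n) (1 : ℚ) := by simp
      have h2 : RingQuot.mkAlgHom ℚ (OSRel n)
          (ExteriorAlgebra.ι ℚ (Finsupp.single (⟨s(i, j), hs⟩ : OSidx n) (1 : ℚ)))
          = eOS n i j := by
        simp only [eOS, hij, dite_false]; rfl
      show RingQuot.mkAlgHom ℚ (OSRel n)
          (ExteriorAlgebra.ι ℚ (Finsupp.single (⟨s(i, j), hs⟩ : OSidx n) r)) ∈ _
      rw [h1, map_smul, map_smul, h2]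
      exact Subalgebra.smul_mem _ (e_mem_A (by simp) (by simp)) r

/-- Augmentation to dual numbers, on the exterior algebra. -/
def φAmb (n : ℕ) : OSamb n →ₐ[ℚ] TrivSqZeroExt ℚ ℚ :=
  ExteriorAlgebra.lift ℚ
    ⟨(TrivSqZeroExt.inrHom ℚ ℚ).comp (Finsupp.linearCombination ℚ (fun _ => (1 : ℚ))),
      fun m => by simp⟩

lemma φAmb_e (i j : Fin (n+1)) (h : i ≠ j) : φAmb n (eAmb n i j h) = TrivSqZeroExt.inr 1 := by
  simp [φAmb, eAmb]

/-- Augmentation to dual numbers: every `e_{ij}` goes to `ε`. -/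
def φ (n : ℕ) : OS n →ₐ[ℚ] TrivSqZeroExt ℚ ℚ :=
  RingQuot.liftAlgHom ℚ ⟨φAmb n, by
    intro x y h
    cases h with
    | rel i j k hij hjk hik => simp [φAmb_e]⟩

lemma φ_e (i j : Fin (n+1)) (h : i ≠ j) : φ n (eOS n i j) = TrivSqZeroExt.inr 1 := by
  simp only [eOS, h, dite_false, φ, RingQuot.liftAlgHom_mkAlgHom_apply, φAmb_e]

lemma perm_mul (σ τ : Equiv.Perm (Fin (n+1))) (x : OS n) :
    OSperm n σ (OSperm n τ x) = OSperm n (σ * τ) x := by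
  have hx := A_univ x
  induction hx using Algebra.adjoin_induction with
  | mem x hx =>
    obtain ⟨i, hi, j, hj, rfl⟩ := hx
    simp [perm_e]
  | algebraMap r => simp
  | add x y _ _ hx hy => simp only [map_add, hx, hy]
  | mul x y _ _ hx hy => simp only [map_mul, hx, hy]

/-- The Reynolds operator. -/
def R (n : ℕ) : OS n →ₗ[ℚ] OS n :=
  (Fintype.card (Equiv.Perm (Fin (n+1))) : ℚ)⁻¹ • ∑ σ, (OSperm n σ).toLinearMap

lemma R_apply (x : OS n) :
    R n x = (Fintype.card (Equiv.Perm (Fin (n+1))) : ℚ)⁻¹ • ∑ σ, OSperm n σ x := by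
  simp [R]

lemma R_perm (σ : Equiv.Perm (Fin (n+1))) (x : OS n) : R n (OSperm n σ x) = R n x := by
  rw [R_apply, R_apply]
  congr 1
  simp only [perm_mul]
  exact Equiv.sum_comp (Equiv.mulRight σ) (fun τ => OSperm n τ x)

lemma perm_R (σ : Equiv.Perm (Fin (n+1))) (x : OS n) : OSperm n σ (R n x) = R n x := by
  rw [R_apply, map_smul, map_sum]
  congr 1
  simp only [perm_mul]
  exact Equiv.sum_comp (Equiv.mulLeft σ) (fun τ => OSperm n τ x)

lemma card_smul_sum {M : Type*} [AddCommGroup M] [Module ℚ M] (x : M) :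
    (Fintype.card (Equiv.Perm (Fin (n+1))) : ℚ)⁻¹ •
      ∑ _σ : Equiv.Perm (Fin (n+1)), x = x := by
  rw [Finset.sum_const, Finset.card_univ, ← Nat.cast_smul_eq_nsmul ℚ, smul_smul,
    inv_mul_cancel₀, one_smul]
  exact_mod_cast Fintype.card_ne_zero

lemma R_of_mem {x : OS n} (hx : x ∈ OSinvFull n) : R n x = x := by
  have hx' : ∀ σ, OSperm n σ x = x := hx
  rw [R_apply]
  simp only [hx']
  exact card_smul_sum x

lemma φ_R_e (hn : 2 ≤ n) : φ n (R n (eOS n 0 (Fin.last n))) = TrivSqZeroExt.inr 1 := by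
  have h0 : (0 : Fin (n+1)) ≠ Fin.last n := by
    intro h; have := congrArg Fin.val h; simp at this; omega
  rw [R_apply, map_smul, map_sum]
  have : ∀ σ, φ n (OSperm n σ (eOS n 0 (Fin.last n))) = TrivSqZeroExt.inr 1 := by
    intro σ
    rw [perm_e, φ_e _ _ (fun h => h0 (σ.injective h))]
  simp only [this]
  exact card_smul_sum _

end OSProof

/-- For every integer `n ≥ 2`, the `ℚ`-vector space `OS_n^{S_{n+1}}` has
dimension `2`. -/
theorem finrank_OSinvFull (n : ℕ) (hn : 2 ≤ n) : Module.finrank ℚ (OSinvFull n) = 2 := by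
  set t := OSProof.R n (eOS n 0 (Fin.last n)) with ht
  have h1 : (1 : OS n) ∈ OSinvFull n := one_mem _
  have hspan : Subalgebra.toSubmodule (OSinvFull n) = Submodule.span ℚ (Set.range ![1, t]) := by
    apply le_antisymm
    · intro x hx
      have hx' : x ∈ OSinvFull n := hx
      have := OSProof.f_all (OSProof.R n) OSProof.R_perm hn Finset.univ x (OSProof.A_univ x)
      rw [OSProof.R_of_mem hx', OSProof.R_of_mem h1] at this
      rw [← ht] at this
      simpa [Set.pair_comm] using this
    · rw [Submodule.span_le]
      rintro _ ⟨i, rfl⟩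
      fin_cases i
      · exact h1
      · exact fun σ => OSProof.perm_R σ _
  have hli : LinearIndependent ℚ ![1, t] := by
    rw [LinearIndependent.pair_iff]
    intro a b hab
    have h := congrArg (OSProof.φ n) hab
    rw [map_add, map_smul, map_smul, map_one, OSProof.φ_R_e hn, map_zero] at h
    have h2 := congrArg TrivSqZeroExt.fst h
    have h3 := congrArg TrivSqZeroExt.snd h
    simp at h2 h3
    exact ⟨h2, h3⟩
  have h2 : Module.finrank ℚ (Subalgebra.toSubmodule (OSinvFull n)) = 2 := by
    rw [hspan, finrank_span_eq_card hli]
    simp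
  exact h2

end
end
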